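/- arXiv:2203.12248 — 6 statements merged into one kernel-verified Lean document; each statement's English description precedes it below -/
import Mathlib

section
/- Let S be a set of positive integers and t a nonnegative integer. Let G_1 and G_2 be finite simple graphs; for each i ∈ {1,2}, let Q_i be a clique in G_i with |Q_1| = |Q_2| = t, and let C_i be a collection of subsets of V(G_i) with Q_i ∈ C_i. Let ι be a bijection from Q_1 to Q_2, and for each i let L_i be a list-assignment of G_i such that L_1(x) = L_2(ι(x)) for every x ∈ Q_1. Let G be a (Q_1,Q_2,ι)-sum of G_1 and G_2 and let L be the list-assignment of G obtained by this (Q_1,Q_2,ι)-sum. If G_1 is (S,C_1,L_1,t_1)-extendable and G_2 is (S,C_2,L_2,t_2)-extendable for some integers t_1 ≥ t and t_2 ≥ t, then G is (S, C_1 ∪ C_2, L, min{t_1,t_2})-extendable. -/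
open SimpleGraph

universe u v

namespace CFPaper

variable {V : Type u} {W : Type v}

/-- A coloring is proper if adjacent vertices get distinct colors. -/
def Proper (G : SimpleGraph V) (φ : V → ℕ) : Prop :=
  ∀ ⦃u w : V⦄, G.Adj u w → φ u ≠ φ w

/-- A coloring is conflict-free if every non-isolated vertex has a color appearing
exactly once in its open neighborhood. -/
def ConflictFree (G : SimpleGraph V) (φ : V → ℕ) : Prop :=
  ∀ v : V, (G.neighborSet v).Nonempty →
    ∃ c : ℕ, {u : V | G.Adj v u ∧ φ u = c}.ncard = 1

/-- `G` is conflict-free `k`-choosable (k a real number). -/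
def CFChoosable (G : SimpleGraph V) (k : ℝ) : Prop :=
  ∀ L : V → Finset ℕ, (∀ v, k ≤ ((L v).card : ℝ)) →
    ∃ φ : V → ℕ, (∀ v, φ v ∈ L v) ∧ Proper G φ ∧ ConflictFree G φ

/-- A coloring is `S`-achieved if for every non-isolated vertex there are `s ∈ S`
and a color appearing exactly `s` times in its open neighborhood. -/
def SAchieved (S : Set ℕ) (G : SimpleGraph V) (φ : V → ℕ) : Prop :=
  ∀ v : V, (G.neighborSet v).Nonempty →
    ∃ s ∈ S, ∃ c : ℕ, {u : V | G.Adj v u ∧ φ u = c}.ncard = s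

/-- `G` is `S`-achieved `t`-choosable. -/
def SChoosable (S : Set ℕ) (G : SimpleGraph V) (t : ℕ) : Prop :=
  ∀ L : V → Finset ℕ, (∀ v, t ≤ (L v).card) →
    ∃ φ : V → ℕ, (∀ v, φ v ∈ L v) ∧ Proper G φ ∧ SAchieved S G φ

/-- `G` is properly `S`-achieved `t`-colorable (colors from `{1,…,t}`). -/
def SColorable (S : Set ℕ) (G : SimpleGraph V) (t : ℕ) : Prop :=
  ∃ φ : V → ℕ, (∀ v, φ v ∈ Finset.Icc 1 t) ∧ Proper G φ ∧ SAchieved S G φ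

/-- `G` has a proper conflict-free coloring with colors from `{1,…,t}`. -/
def PCFColorable (G : SimpleGraph V) (t : ℕ) : Prop :=
  ∃ φ : V → ℕ, (∀ v, φ v ∈ Finset.Icc 1 t) ∧ Proper G φ ∧ ConflictFree G φ

/-- The proper conflict-free chromatic number. -/
noncomputable def chiPCF (G : SimpleGraph V) : ℕ := sInf {t : ℕ | PCFColorable G t}

/-- `(B x : x : ι)` is a tree-decomposition of `G` with underlying tree `T`. -/
structure IsTreeDecomp (G : SimpleGraph V) {ι : Type*} (T : SimpleGraph ι) (B : ι → Set V) :
    Prop where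
  tree : T.IsTree
  bags_connected : ∀ vv : V, (T.induce {x : ι | vv ∈ B x}).Connected
  edge_in_bag : ∀ ⦃a b : V⦄, G.Adj a b → ∃ x : ι, a ∈ B x ∧ b ∈ B x

/-- The torso of a tree-decomposition at a node `x`. -/
def torso (G : SimpleGraph V) {ι : Type*} (T : SimpleGraph ι) (B : ι → Set V) (x : ι) :
    SimpleGraph (B x) :=
  SimpleGraph.fromRel fun a b =>
    G.Adj a b ∨ ∃ y : ι, T.Adj x y ∧ (a : V) ∈ B y ∧ (b : V) ∈ B y

/-- The frame of a tree-decomposition at a node `x`. -/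
def frame (G : SimpleGraph V) {ι : Type*} (T : SimpleGraph ι) (B : ι → Set V) (x : ι) :
    Set (Set (B x)) :=
  {s : Set (B x) | ∃ y : ι, T.Adj x y ∧ s = {a : B x | (a : V) ∈ B y}}

/-- A subgraph `H` of `G` is `C`-compatible: every edge of `H` has both ends in some member
of `C`. -/
def Compatible (C : Set (Set V)) (H : SimpleGraph V) : Prop :=
  ∀ ⦃a b : V⦄, H.Adj a b → ∃ c ∈ C, a ∈ c ∧ b ∈ c

/-- `G` is `(S,C,L,t)`-extendable. -/
def Extendable (S : Set ℕ) (G : SimpleGraph V) (C : Set (Set V)) (L : V → Finset ℕ)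
    (t : ℕ) : Prop :=
  ∀ (Wc : Set V), G.IsClique Wc → Wc.ncard ≤ t →
  ∀ (H : SimpleGraph V), H ≤ G → Compatible C H →
  ∀ (φW : V → ℕ), (∀ w ∈ Wc, φW w ∈ L w) →
    (∀ a ∈ Wc, ∀ b ∈ Wc, G.Adj a b → φW a ≠ φW b) →
  ∀ (f : V → ℕ) (g : V → Bool),
  ∃ φ : V → ℕ, (∀ w, φ w ∈ L w) ∧ Proper G φ ∧ (∀ w ∈ Wc, φ w = φW w) ∧
    (∀ w ∈ Wc, g w = false → ∀ u : V, G.Adj w u → u ∉ Wc → φ u ≠ f w) ∧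
    (∀ w : V, (w ∉ Wc ∨ (w ∈ Wc ∧ g w = true)) →
      (((G \ H).neighborSet w = ∅) ∨
        ∃ c : ℕ, {u : V | (G \ H).Adj w u ∧ φ u = c}.ncard ∈ S))

/-- `H` is a minor of `G` (branch-set definition). -/
def IsMinor (H : SimpleGraph W) (G : SimpleGraph V) : Prop :=
  ∃ ρ : W → Set V,
    (∀ w : W, (G.induce (ρ w)).Connected) ∧
    (Pairwise fun a b => Disjoint (ρ a) (ρ b)) ∧
    ∀ ⦃a b : W⦄, H.Adj a b → ∃ x ∈ ρ a, ∃ y ∈ ρ b, G.Adj x y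

/-- The spanning subgraph of `G` whose edges are those between `A` and its complement. -/
def crossGraph (G : SimpleGraph V) (A : Set V) : SimpleGraph V :=
  SimpleGraph.fromRel fun x y => G.Adj x y ∧ x ∈ A ∧ y ∉ A

/-- The odd contraction of `G` determined by the bipartition `{A, Aᶜ}`: contract each
connected component of the spanning bipartite subgraph between `A` and `Aᶜ`. -/
def oddContract (G : SimpleGraph V) (A : Set V) :
    SimpleGraph ((crossGraph G A).ConnectedComponent) :=
  SimpleGraph.fromRel fun Ct Dt =>
    ∃ x y : V, (crossGraph G A).connectedComponentMk x = Ct ∧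
      (crossGraph G A).connectedComponentMk y = Dt ∧ G.Adj x y

/-- `OddContractions G H`: `H` is obtained from `G` by repeatedly applying odd
contractions. -/
inductive OddContractions : ∀ {α : Type u}, SimpleGraph α → ∀ {β : Type u}, SimpleGraph β → Prop
  | refl {α : Type u} (G : SimpleGraph α) : OddContractions G G
  | step {α : Type u} (G : SimpleGraph α) (A : Set α) {β : Type u} {H : SimpleGraph β} :
      OddContractions (oddContract G A) H → OddContractions G H

/-- `H` is an odd minor of `G`: `H` is isomorphic to a graph obtained from a subgraph of `G`
by repeatedly applying odd contractions. -/
def IsOddMinor (H : SimpleGraph W) (G : SimpleGraph V) : Prop :=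
  ∃ (s : Set V) (G₀ : SimpleGraph s), G₀ ≤ G.induce s ∧
    ∃ (β : Type u) (K : SimpleGraph β), OddContractions G₀ K ∧ Nonempty (H ≃g K)

/-- The graph obtained from `H` by subdividing each edge `e` exactly `n e` times, where
`σ` chooses an orientation of each edge. -/
def subdivGraph (H : SimpleGraph W) (σ : H.edgeSet → W × W) (n : H.edgeSet → ℕ) :
    SimpleGraph (W ⊕ (Σ e : H.edgeSet, Fin (n e))) :=
  SimpleGraph.fromRel fun a b =>
    (∃ (x y : W) (h : H.Adj x y),
        a = Sum.inl x ∧ b = Sum.inl y ∧ n ⟨s(x, y), H.mem_edgeSet.mpr h⟩ = 0) ∨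
    (∃ (x : W) (p : Σ e : H.edgeSet, Fin (n e)), a = Sum.inl x ∧ b = Sum.inr p ∧
        ((x = (σ p.1).1 ∧ (p.2 : ℕ) = 0) ∨ (x = (σ p.1).2 ∧ (p.2 : ℕ) = n p.1 - 1))) ∨
    (∃ p q : Σ e : H.edgeSet, Fin (n e), a = Sum.inr p ∧ b = Sum.inr q ∧ p.1 = q.1 ∧
        (p.2 : ℕ) + 1 = (q.2 : ℕ))

/-- `σ` is a valid orientation of the edges of `H`. -/
def ValidOrientation (H : SimpleGraph W) (σ : H.edgeSet → W × W) : Prop :=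
  ∀ e : H.edgeSet, s((σ e).1, (σ e).2) = (e : Sym2 W)

/-- `G` contains a subdivision of `H` as a subgraph. -/
def ContainsSubdivision (H : SimpleGraph W) (G : SimpleGraph V) : Prop :=
  ∃ (σ : H.edgeSet → W × W) (n : H.edgeSet → ℕ), ValidOrientation H σ ∧
    ∃ f : subdivGraph H σ n →g G, Function.Injective f

/-- The strong product of two graphs. -/
def strongProd {α : Type*} {β : Type*} (A : SimpleGraph α) (B : SimpleGraph β) :
    SimpleGraph (α × β) :=
  SimpleGraph.fromRel fun p q =>
    (A.Adj p.1 q.1 ∧ p.2 = q.2) ∨ (p.1 = q.1 ∧ B.Adj p.2 q.2) ∨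
      (A.Adj p.1 q.1 ∧ B.Adj p.2 q.2)


/-- A layering of `G`. -/
def IsLayering (G : SimpleGraph V) (Vl : ℕ → Set V) : Prop :=
  (∀ vv : V, ∃ i : ℕ, vv ∈ Vl i) ∧ (Pairwise fun i j => Disjoint (Vl i) (Vl j)) ∧
  ∀ ⦃a b : V⦄, G.Adj a b → ∃ i : ℕ, a ∈ Vl i ∪ Vl (i + 1) ∧ b ∈ Vl i ∪ Vl (i + 1)

/-!
An edge of the sum with an end outside one side lies in the other side, so a clique lies in one
side, say the image of `G₁`. Color `G₁` first. Then extend the coloring of `Q₂` inherited from `Q₁`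
to `G₂`, deleting from the second graph every edge already present in the first. A vertex of the
glued clique whose requirement is met by the `c`-colored neighbors in `G₁` keeps it, because
`f = c` and `g = 0` forbid new neighbors of color `c` in `G₂`; a vertex without relevant neighbors
in `G₁` gets `g = 1`, so its requirement is met entirely in `G₂`.
-/

section Extension

open Set Function

variable {α β γ δ : Type*} {S : Set ℕ} {G D : SimpleGraph α} {C : Set (Set α)} {L : α → Finset ℕ}
  {t : ℕ} {K : Set α} {φK f : α → ℕ} {g : α → Bool} {φ : α → ℕ}

/-- The requirement that a coloring `φ` has to meet on the neighborhood `N` of a vertex: `N` is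
empty or the number of occurrences of some color in `N` belongs to `S`. -/
def Achieves (S : Set ℕ) (φ : α → ℕ) (N : Set α) : Prop :=
  N = ∅ ∨ ∃ c, (N ∩ φ ⁻¹' {c}).ncard ∈ S

/-- A clique `K` of size at most `t` together with a proper `L`-coloring `φK` of it; properness on
a clique is injectivity. -/
structure IsPrecoloredClique (G : SimpleGraph α) (L : α → Finset ℕ) (t : ℕ) (φK : α → ℕ)
    (K : Set α) : Prop where
  isClique : G.IsClique K
  ncard_le : K.ncard ≤ t
  mem_list : ∀ v ∈ K, φK v ∈ L v
  injOn : InjOn φK K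

/-- The colorings `φ` sought in the definition of `Extendable`, with `D` standing for the graph
`G \ H` in which the neighborhoods are taken. -/
structure IsExtension (S : Set ℕ) (G D : SimpleGraph α) (L : α → Finset ℕ) (K : Set α)
    (φK f : α → ℕ) (g : α → Bool) (φ : α → ℕ) : Prop where
  mem_list : ∀ v, φ v ∈ L v
  proper : Proper G φ
  eqOn : EqOn φ φK K
  ne_of_adj : ∀ v ∈ K, g v = false → ∀ u, G.Adj v u → u ∉ K → φ u ≠ f v
  achieves : ∀ v, (v ∈ K → g v = true) → Achieves S φ (D.neighborSet v)

/-- Data `f'`, `g'` to be imposed on vertices that are about to receive further neighbors: the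
constraint `f` is kept where it is in force (`g = 0`), and elsewhere `g' = 1` marks the vertices
without neighbors in `D`, while `f'` is a color whose multiplicity among the neighbors in `D`
already belongs to `S`. -/
structure IsGuard (S : Set ℕ) (D : SimpleGraph α) (φ : α → ℕ) (K : Set α) (f : α → ℕ)
    (g : α → Bool) (f' : α → ℕ) (g' : α → Bool) : Prop where
  eq_of_constrained : ∀ v ∈ K, g v = false → g' v = false ∧ f' v = f v
  neighborSet_eq_empty : ∀ v, (v ∈ K → g v = true) → g' v = true → D.neighborSet v = ∅
  ncard_mem : ∀ v, (v ∈ K → g v = true) → g' v = false →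
    (D.neighborSet v ∩ φ ⁻¹' {f' v}).ncard ∈ S

theorem extendable_iff : Extendable S G C L t ↔
    ∀ ⦃φK : α → ℕ⦄ ⦃K : Set α⦄, IsPrecoloredClique G L t φK K →
      ∀ ⦃D : SimpleGraph α⦄, D ≤ G → Compatible C (G \ D) →
        ∀ (f : α → ℕ) (g : α → Bool), ∃ φ, IsExtension S G D L K φK f g φ := by
  have free_iff (K : Set α) (g : α → Bool) (v : α) :
      (v ∉ K ∨ v ∈ K ∧ g v = true) ↔ (v ∈ K → g v = true) := by tauto
  constructor
  · intro h φK K hK D hDG hC f g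
    obtain ⟨φ, hL, hproper, heq, hne, hach⟩ := h K hK.isClique hK.ncard_le (G \ D) sdiff_le hC φK
      hK.mem_list (fun a ha b hb hab => hK.injOn.ne ha hb hab.ne) f g
    rw [sdiff_sdiff_eq_self hDG] at hach
    exact ⟨φ, hL, hproper, heq, hne, fun v hv => hach v ((free_iff K g v).2 hv)⟩
  · intro h K hK ht H hHG hC φK hφL hφK f g
    have hinj : InjOn φK K := fun a ha b hb hab =>
      by_contra fun hne => hφK a ha b hb (hK ha hb hne) hab
    obtain ⟨φ, hφ⟩ := h ⟨hK, ht, hφL, hinj⟩ (sdiff_le : G \ H ≤ G)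
      (by rwa [sdiff_sdiff_eq_self hHG]) f g
    exact ⟨φ, hφ.mem_list, hφ.proper, hφ.eqOn, hφ.ne_of_adj,
      fun v hv => hφ.achieves v ((free_iff K g v).1 hv)⟩

theorem IsExtension.exists_isGuard (h : IsExtension S G D L K φK f g φ) :
    ∃ f' g', IsGuard S D φ K f g f' g' := by
  have hvertex : ∀ v, ∃ (c : ℕ) (b : Bool), (v ∈ K → g v = false → b = false ∧ c = f v) ∧
      ((v ∈ K → g v = true) → b = true → D.neighborSet v = ∅) ∧
      ((v ∈ K → g v = true) → b = false → (D.neighborSet v ∩ φ ⁻¹' {c}).ncard ∈ S) := by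
    intro v
    by_cases hv : v ∈ K → g v = true
    · rcases h.achieves v hv with hempty | ⟨c, hc⟩
      · exact ⟨0, true, by simp_all⟩
      · exact ⟨c, false, by simp_all⟩
    · exact ⟨f v, false, by simp_all⟩
  choose f' g' h₁ h₂ h₃ using hvertex
  exact ⟨f', g', h₁, h₂, h₃⟩

theorem Achieves.of_preimage {e : α → γ} {φ : γ → ℕ} {N : Set γ} (he : Injective e)
    (hN : N ⊆ range e) (h : Achieves S (φ ∘ e) (e ⁻¹' N)) : Achieves S φ N := by
  refine h.imp (fun hempty => ?_) (fun ⟨c, hc⟩ => ⟨c, ?_⟩)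
  · rwa [preimage_eq_empty_iff, disjoint_iff_inter_eq_empty, inter_eq_left.2 hN] at hempty
  · rwa [← ncard_preimage_of_injective_subset_range he (inter_subset_left.trans hN)]

theorem IsPrecoloredClique.preimage {G : SimpleGraph γ} {L : γ → Finset ℕ} {φK : γ → ℕ}
    {K : Set γ} {G' : SimpleGraph α} {e : α → γ} (hK : IsPrecoloredClique G L t φK K)
    (he : Injective e) (hKe : K ⊆ range e) (hG' : G.comap e ≤ G') :
    IsPrecoloredClique G' (L ∘ e) t (φK ∘ e) (e ⁻¹' K) where
  isClique _ ha _ hb hab := hG' (hK.isClique ha hb (he.ne hab))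
  ncard_le := (ncard_preimage_of_injective_subset_range he hKe).trans_le hK.ncard_le
  mem_list v hv := hK.mem_list (e v) hv
  injOn := hK.injOn.comp he.injOn (mapsTo_preimage e K)

theorem exists_comp_eq_and_comp_eq {e₁ : α → γ} {e₂ : β → γ} {ψ : γ → δ} {χ : β → δ}
    (he₂ : Injective e₂) (hχ : ∀ y, e₂ y ∈ range e₁ → χ y = ψ (e₂ y)) :
    ∃ φ : γ → δ, φ ∘ e₁ = ψ ∘ e₁ ∧ φ ∘ e₂ = χ := by
  refine ⟨extend e₂ χ ψ, funext fun x => ?_, extend_comp he₂ χ ψ⟩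
  by_cases hx : ∃ y, e₂ y = e₁ x
  · obtain ⟨y, hy⟩ := hx
    rw [comp_apply, comp_apply, ← hy, he₂.extend_apply, hχ y ⟨x, hy.symm⟩]
  · exact extend_apply' χ ψ (e₁ x) hx

theorem neighborSet_deleteEdges_sym2 {A : Set α} {v : α}
    (hv : v ∈ A → Disjoint (D.neighborSet v) A) :
    (D.deleteEdges A.sym2).neighborSet v = D.neighborSet v := by
  ext u
  simp only [mem_neighborSet, deleteEdges_adj, mk_mem_sym2_iff, and_iff_left_iff_imp]
  exact fun huv ⟨hvA, huA⟩ => disjoint_left.1 (hv hvA) huv huA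

end Extension

section CliqueSum

open Set Function

variable {α β γ : Type*} {S : Set ℕ} {G₁ : SimpleGraph α} {G₂ : SimpleGraph β} {Q₁ : Set α}
  {Q₂ : Set β} {e₁ : α → γ} {e₂ : β → γ} {G D : SimpleGraph γ} {C₁ : Set (Set α)}
  {C₂ : Set (Set β)} {L : γ → Finset ℕ} {t₁ t₂ : ℕ} {K : Set γ} {φK f : γ → ℕ} {g : γ → Bool}
  {φ f' : γ → ℕ} {g' : γ → Bool} {χ : β → ℕ}

/-- `G` is a sum of `G₁` and `G₂` along the cliques `Q₁` and `Q₂`. The identification is encoded by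
the maps `e₁`, `e₂` of the two sides into `V(G)`, whose ranges meet exactly in the identified
clique; adjacency in `G` between two vertices of that clique is left unconstrained, since any of
those edges may have been deleted. -/
structure IsCliqueSum (G₁ : SimpleGraph α) (G₂ : SimpleGraph β) (Q₁ : Set α) (Q₂ : Set β)
    (e₁ : α → γ) (e₂ : β → γ) (G : SimpleGraph γ) : Prop where
  isClique_left : G₁.IsClique Q₁
  isClique_right : G₂.IsClique Q₂
  injective_left : Injective e₁
  injective_right : Injective e₂
  mem_range_or : ∀ u, u ∈ range e₁ ∨ u ∈ range e₂
  mem_left_iff : ∀ x, x ∈ Q₁ ↔ e₁ x ∈ range e₂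
  mem_right_iff : ∀ y, y ∈ Q₂ ↔ e₂ y ∈ range e₁
  adj_left_iff : ∀ x x', ¬(x ∈ Q₁ ∧ x' ∈ Q₁) → (G.Adj (e₁ x) (e₁ x') ↔ G₁.Adj x x')
  adj_right_iff : ∀ y y', ¬(y ∈ Q₂ ∧ y' ∈ Q₂) → (G.Adj (e₂ y) (e₂ y') ↔ G₂.Adj y y')
  not_adj : ∀ x y, x ∉ Q₁ → y ∉ Q₂ → ¬G.Adj (e₁ x) (e₂ y)

namespace IsCliqueSum

theorem of_glue {ι : α → β} (hQ₁ : G₁.IsClique Q₁) (hQ₂ : G₂.IsClique Q₂)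
    (hι : SurjOn ι Q₁ Q₂) (hιQ : MapsTo ι Q₁ Q₂) (he₁ : Injective e₁) (he₂ : Injective e₂)
    (hcover : ∀ u, u ∈ range e₁ ∨ u ∈ range e₂)
    (hglue : ∀ x y, e₁ x = e₂ y ↔ x ∈ Q₁ ∧ ι x = y)
    (hadj₁ : ∀ x x', ¬(x ∈ Q₁ ∧ x' ∈ Q₁) → (G.Adj (e₁ x) (e₁ x') ↔ G₁.Adj x x'))
    (hadj₂ : ∀ y y', ¬(y ∈ Q₂ ∧ y' ∈ Q₂) → (G.Adj (e₂ y) (e₂ y') ↔ G₂.Adj y y'))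
    (hnot_adj : ∀ x y, x ∉ Q₁ → y ∉ Q₂ → ¬G.Adj (e₁ x) (e₂ y)) :
    IsCliqueSum G₁ G₂ Q₁ Q₂ e₁ e₂ G where
  isClique_left := hQ₁
  isClique_right := hQ₂
  injective_left := he₁
  injective_right := he₂
  mem_range_or := hcover
  mem_left_iff x := ⟨fun hx => ⟨ι x, ((hglue x (ι x)).2 ⟨hx, rfl⟩).symm⟩,
    fun ⟨y, hy⟩ => ((hglue x y).1 hy.symm).1⟩
  mem_right_iff y := by
    rw [← hι.image_eq_of_mapsTo hιQ]
    simp only [mem_range, hglue, mem_image]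
  adj_left_iff := hadj₁
  adj_right_iff := hadj₂
  not_adj := hnot_adj

theorem symm (h : IsCliqueSum G₁ G₂ Q₁ Q₂ e₁ e₂ G) : IsCliqueSum G₂ G₁ Q₂ Q₁ e₂ e₁ G where
  isClique_left := h.isClique_right
  isClique_right := h.isClique_left
  injective_left := h.injective_right
  injective_right := h.injective_left
  mem_range_or u := (h.mem_range_or u).symm
  mem_left_iff := h.mem_right_iff
  mem_right_iff := h.mem_left_iff
  adj_left_iff := h.adj_right_iff
  adj_right_iff := h.adj_left_iff
  not_adj y x hy hx hyx := h.not_adj x y hx hy hyx.symm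

theorem comap_left_le (h : IsCliqueSum G₁ G₂ Q₁ Q₂ e₁ e₂ G) : G.comap e₁ ≤ G₁ := by
  intro x x' hxx'
  by_cases hQ : x ∈ Q₁ ∧ x' ∈ Q₁
  · exact h.isClique_left hQ.1 hQ.2 hxx'.ne
  · exact (h.adj_left_iff x x' hQ).1 hxx'

theorem comap_right_le (h : IsCliqueSum G₁ G₂ Q₁ Q₂ e₁ e₂ G) : G.comap e₂ ≤ G₂ :=
  h.symm.comap_left_le

theorem mem_range_left_of_adj (h : IsCliqueSum G₁ G₂ Q₁ Q₂ e₁ e₂ G) {u v : γ} (huv : G.Adj u v)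
    (hu : u ∉ range e₂) : v ∈ range e₁ := by
  by_contra hv
  obtain ⟨x, rfl⟩ := (h.mem_range_or u).resolve_right hu
  obtain ⟨y, rfl⟩ := (h.mem_range_or v).resolve_left hv
  exact h.not_adj x y (mt (h.mem_left_iff x).1 hu) (mt (h.mem_right_iff y).1 hv) huv

theorem mem_range_right_of_adj (h : IsCliqueSum G₁ G₂ Q₁ Q₂ e₁ e₂ G) {u v : γ}
    (huv : G.Adj u v) (hu : u ∉ range e₁) : v ∈ range e₂ :=
  h.symm.mem_range_left_of_adj huv hu

theorem subset_range_of_isClique (h : IsCliqueSum G₁ G₂ Q₁ Q₂ e₁ e₂ G) (hK : G.IsClique K) :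
    K ⊆ range e₁ ∨ K ⊆ range e₂ := by
  by_contra! hsub
  obtain ⟨⟨u, huK, hu⟩, v, hvK, hv⟩ := hsub.imp not_subset.1 not_subset.1
  have hvu : v ≠ u := by
    rintro rfl
    exact (h.mem_range_or v).elim hu hv
  exact hu (h.mem_range_left_of_adj (hK hvK huK hvu) hv)

theorem compatible_left (h : IsCliqueSum G₁ G₂ Q₁ Q₂ e₁ e₂ G) {D₁ : SimpleGraph α}
    (hQ₁ : Q₁ ∈ C₁) (hC : Compatible ((fun c => e₁ '' c) '' C₁ ∪ (fun c => e₂ '' c) '' C₂) (G \ D))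
    (hD : ∀ x x', ¬(x ∈ Q₁ ∧ x' ∈ Q₁) → D.Adj (e₁ x) (e₁ x') → D₁.Adj x x') :
    Compatible C₁ (G₁ \ D₁) := by
  intro x x' ⟨hadj, hnot_adj⟩
  by_cases hQ : x ∈ Q₁ ∧ x' ∈ Q₁
  · exact ⟨Q₁, hQ₁, hQ⟩
  have hGD : (G \ D).Adj (e₁ x) (e₁ x') :=
    ⟨(h.adj_left_iff x x' hQ).2 hadj, fun hxx' => hnot_adj (hD x x' hQ hxx')⟩
  obtain ⟨_, ⟨c, hc, rfl⟩ | ⟨c, -, rfl⟩, hx, hx'⟩ := hC hGD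
  · exact ⟨c, hc, h.injective_left.mem_set_image.1 hx, h.injective_left.mem_set_image.1 hx'⟩
  · exact absurd ⟨(h.mem_left_iff x).2 (image_subset_range e₂ c hx),
      (h.mem_left_iff x').2 (image_subset_range e₂ c hx')⟩ hQ

theorem isPrecoloredClique_right (h : IsCliqueSum G₁ G₂ Q₁ Q₂ e₁ e₂ G) (ht₂ : Q₂.ncard ≤ t₂)
    (hφL : ∀ x, φ (e₁ x) ∈ L (e₁ x)) (hφ : Proper G₁ (φ ∘ e₁)) :
    IsPrecoloredClique G₂ (L ∘ e₂) t₂ (φ ∘ e₂) Q₂ where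
  isClique := h.isClique_right
  ncard_le := ht₂
  mem_list y hy := by
    obtain ⟨x, hx⟩ := (h.mem_right_iff y).1 hy
    simpa only [comp_apply, ← hx] using hφL x
  injOn y hy y' hy' hyy' := by
    obtain ⟨x, hx⟩ := (h.mem_right_iff y).1 hy
    obtain ⟨x', hx'⟩ := (h.mem_right_iff y').1 hy'
    have hxQ : x ∈ Q₁ := (h.mem_left_iff x).2 ⟨y, hx.symm⟩
    have hxQ' : x' ∈ Q₁ := (h.mem_left_iff x').2 ⟨y', hx'.symm⟩
    simp only [comp_apply, ← hx, ← hx'] at hyy'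
    have hxx' : x = x' := by_contra fun hne => hφ (h.isClique_left hxQ hxQ' hne) hyy'
    exact h.injective_right (by rw [← hx, ← hx', hxx'])

theorem proper_of_comp (h : IsCliqueSum G₁ G₂ Q₁ Q₂ e₁ e₂ G) (h₁ : Proper G₁ (φ ∘ e₁))
    (h₂ : Proper G₂ (φ ∘ e₂)) : Proper G φ := by
  intro u v huv
  by_cases hside : u ∈ range e₁ ∧ v ∈ range e₁
  · obtain ⟨⟨x, rfl⟩, x', rfl⟩ := hside
    exact h₁ (h.comap_left_le huv)
  · obtain ⟨⟨y, rfl⟩, y', rfl⟩ : u ∈ range e₂ ∧ v ∈ range e₂ :=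
      ⟨by_contra fun hu => hside
        ⟨(h.mem_range_or u).resolve_right hu, h.mem_range_left_of_adj huv hu⟩,
      by_contra fun hv => hside
        ⟨h.mem_range_left_of_adj huv.symm hv, (h.mem_range_or v).resolve_right hv⟩⟩
    exact h₂ (h.comap_right_le huv)

section Glue

variable (h : IsCliqueSum G₁ G₂ Q₁ Q₂ e₁ e₂ G)
  (h₂ : IsExtension S G₂ ((D.deleteEdges (range e₁).sym2).comap e₂) (L ∘ e₂) Q₂ χ
    (f' ∘ e₂) (g' ∘ e₂) (φ ∘ e₂))
include h h₂

theorem ne_of_adj_of_notMem_range {u v : γ} (hv : v ∈ range e₁) (hg' : g' v = false)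
    (hvu : G.Adj v u) (hu : u ∉ range e₁) : φ u ≠ f' v := by
  obtain ⟨y, rfl⟩ := h.mem_range_right_of_adj hvu.symm hu
  obtain ⟨y', rfl⟩ := (h.mem_range_or u).resolve_left hu
  exact h₂.ne_of_adj y ((h.mem_right_iff y).2 hv) hg' y' (h.comap_right_le hvu)
    (mt (h.mem_right_iff y').1 hu)

theorem achieves_right {y : β} (hDG : D ≤ G)
    (hy : e₂ y ∈ range e₁ → g' (e₂ y) = true ∧ Disjoint (D.neighborSet (e₂ y)) (range e₁)) :
    Achieves S φ (D.neighborSet (e₂ y)) := by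
  have hN : D.neighborSet (e₂ y) ⊆ range e₂ := fun u hu => by
    by_cases hmem : e₂ y ∈ range e₁
    · exact (h.mem_range_or u).resolve_left (disjoint_left.1 (hy hmem).2 hu)
    · exact h.mem_range_right_of_adj (hDG hu) hmem
  refine .of_preimage h.injective_right hN ?_
  rw [← neighborSet_deleteEdges_sym2 fun hmem => (hy hmem).2]
  exact h₂.achieves y fun hyQ => (hy ((h.mem_right_iff y).1 hyQ)).1

theorem achieves_left {x : α} (hDG : D ≤ G)
    (hguard : IsGuard S (D.comap e₁) (φ ∘ e₁) (e₁ ⁻¹' K) (f ∘ e₁) (g ∘ e₁) (f' ∘ e₁) (g' ∘ e₁))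
    (hx : e₁ x ∈ K → g (e₁ x) = true) : Achieves S φ (D.neighborSet (e₁ x)) := by
  cases hg' : g' (e₁ x) with
  | true =>
    have hdisj : Disjoint (D.neighborSet (e₁ x)) (range e₁) :=
      preimage_eq_empty_iff.1 (hguard.neighborSet_eq_empty x hx hg')
    by_cases hmem : e₁ x ∈ range e₂
    · obtain ⟨y, hy⟩ := hmem
      rw [← hy] at hg' hdisj ⊢
      exact h.achieves_right h₂ hDG fun _ => ⟨hg', hdisj⟩
    · exact .inl (hdisj.eq_bot_of_le fun u hu => h.mem_range_left_of_adj (hDG hu) hmem)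
  | false =>
    have hclass : D.neighborSet (e₁ x) ∩ φ ⁻¹' {f' (e₁ x)} ⊆ range e₁ := fun u ⟨hu, hφu⟩ =>
      by_contra fun hmem =>
        h.ne_of_adj_of_notMem_range h₂ (mem_range_self x) hg' (hDG hu) hmem hφu
    refine .inr ⟨f' (e₁ x), ?_⟩
    rw [← ncard_preimage_of_injective_subset_range h.injective_left hclass]
    exact hguard.ncard_mem x hx hg'

theorem isExtension (hDG : D ≤ G) (hK : K ⊆ range e₁)
    (h₁ : IsExtension S G₁ (D.comap e₁) (L ∘ e₁) (e₁ ⁻¹' K) (φK ∘ e₁) (f ∘ e₁) (g ∘ e₁) (φ ∘ e₁))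
    (hguard : IsGuard S (D.comap e₁) (φ ∘ e₁) (e₁ ⁻¹' K) (f ∘ e₁) (g ∘ e₁) (f' ∘ e₁) (g' ∘ e₁)) :
    IsExtension S G D L K φK f g φ where
  mem_list u := by
    obtain ⟨x, rfl⟩ | ⟨y, rfl⟩ := h.mem_range_or u
    exacts [h₁.mem_list x, h₂.mem_list y]
  proper := h.proper_of_comp h₁.proper h₂.proper
  eqOn v hv := by
    obtain ⟨x, rfl⟩ := hK hv
    exact h₁.eqOn hv
  ne_of_adj v hv hg u hvu huK := by
    obtain ⟨x, rfl⟩ := hK hv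
    by_cases hu : u ∈ range e₁
    · obtain ⟨x', rfl⟩ := hu
      exact h₁.ne_of_adj x hv hg x' (h.comap_left_le hvu) huK
    · obtain ⟨hg', hf' : f' (e₁ x) = f (e₁ x)⟩ := hguard.eq_of_constrained x hv hg
      exact hf' ▸ h.ne_of_adj_of_notMem_range h₂ (mem_range_self x) hg' hvu hu
  achieves v hv := by
    by_cases hmem : v ∈ range e₁
    · obtain ⟨x, rfl⟩ := hmem
      exact h.achieves_left h₂ hDG hguard hv
    · obtain ⟨y, rfl⟩ := (h.mem_range_or v).resolve_left hmem
      exact h.achieves_right h₂ hDG fun hy => absurd hy hmem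

end Glue

theorem exists_isExtension (h : IsCliqueSum G₁ G₂ Q₁ Q₂ e₁ e₂ G) (hQ₁ : Q₁ ∈ C₁) (hQ₂ : Q₂ ∈ C₂)
    (ht₂ : Q₂.ncard ≤ t₂) (hext₁ : Extendable S G₁ C₁ (L ∘ e₁) t₁)
    (hext₂ : Extendable S G₂ C₂ (L ∘ e₂) t₂) (hK : IsPrecoloredClique G L t₁ φK K)
    (hKe₁ : K ⊆ range e₁) (hDG : D ≤ G)
    (hC : Compatible ((fun c => e₁ '' c) '' C₁ ∪ (fun c => e₂ '' c) '' C₂) (G \ D))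
    (f : γ → ℕ) (g : γ → Bool) : ∃ φ, IsExtension S G D L K φK f g φ := by
  have hD₁ : D.comap e₁ ≤ G₁ := fun x x' hxx' => h.comap_left_le (hDG hxx')
  have hD₂ : (D.deleteEdges (range e₁).sym2).comap e₂ ≤ G₂ := fun y y' hyy' =>
    h.comap_right_le (hDG (D.deleteEdges_le _ hyy'))
  have hcompat₁ : Compatible C₁ (G₁ \ D.comap e₁) :=
    h.compatible_left hQ₁ hC fun _ _ _ hxx' => hxx'
  have hcompat₂ : Compatible C₂ (G₂ \ (D.deleteEdges (range e₁).sym2).comap e₂) := by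
    refine h.symm.compatible_left hQ₂ (union_comm _ _ ▸ hC) fun y y' hQ hyy' => ?_
    rw [h.mem_right_iff, h.mem_right_iff] at hQ
    exact deleteEdges_adj.2 ⟨hyy', hQ⟩
  obtain ⟨φ₁, h₁⟩ := extendable_iff.1 hext₁
    (hK.preimage h.injective_left hKe₁ h.comap_left_le) hD₁ hcompat₁ (f ∘ e₁) (g ∘ e₁)
  obtain ⟨f₁, g₁, hguard⟩ := h₁.exists_isGuard
  obtain ⟨ψ, rfl⟩ := h.injective_left.surjective_comp_right φ₁
  obtain ⟨f', rfl⟩ := h.injective_left.surjective_comp_right f₁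
  obtain ⟨g', rfl⟩ := h.injective_left.surjective_comp_right g₁
  obtain ⟨φ₂, h₂⟩ := extendable_iff.1 hext₂
    (h.isPrecoloredClique_right ht₂ h₁.mem_list h₁.proper) hD₂ hcompat₂ (f' ∘ e₂) (g' ∘ e₂)
  obtain ⟨φ, hφ, rfl⟩ : ∃ φ : γ → ℕ, φ ∘ e₁ = ψ ∘ e₁ ∧ φ ∘ e₂ = φ₂ :=
    exists_comp_eq_and_comp_eq h.injective_right fun y hy => h₂.eqOn ((h.mem_right_iff y).2 hy)
  simp only [← hφ] at h₁ hguard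
  exact ⟨φ, h.isExtension h₂ hDG hKe₁ h₁ hguard⟩

end IsCliqueSum

-- `Set.ncard` is `0` on infinite sets: in infinite graphs, `Extendable` also extends colorings
-- of infinite cliques.
theorem stmt7_general (h : IsCliqueSum G₁ G₂ Q₁ Q₂ e₁ e₂ G) (hQ₁ : Q₁ ∈ C₁) (hQ₂ : Q₂ ∈ C₂)
    (ht₁ : Q₁.ncard ≤ t₁) (ht₂ : Q₂.ncard ≤ t₂) (hext₁ : Extendable S G₁ C₁ (L ∘ e₁) t₁)
    (hext₂ : Extendable S G₂ C₂ (L ∘ e₂) t₂) :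
    Extendable S G ((fun c => e₁ '' c) '' C₁ ∪ (fun c => e₂ '' c) '' C₂) L (min t₁ t₂) := by
  refine extendable_iff.2 fun φK K hK D hDG hC f g => ?_
  rcases h.subset_range_of_isClique hK.isClique with hKe₁ | hKe₂
  · exact h.exists_isExtension hQ₁ hQ₂ ht₂ hext₁ hext₂
      { hK with ncard_le := hK.ncard_le.trans (min_le_left t₁ t₂) } hKe₁ hDG hC f g
  · exact h.symm.exists_isExtension hQ₂ hQ₁ ht₁ hext₂ hext₁
      { hK with ncard_le := hK.ncard_le.trans (min_le_right t₁ t₂) } hKe₂ hDG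
      (union_comm _ _ ▸ hC) f g

end CliqueSum

theorem stmt7 (S : Set ℕ) (hSpos : ∀ s ∈ S, 0 < s) (t : ℕ)
    (V₁ V₂ U : Type) [Fintype V₁] [Fintype V₂] [Fintype U]
    (G₁ : SimpleGraph V₁) (G₂ : SimpleGraph V₂)
    (Q₁ : Set V₁) (Q₂ : Set V₂)
    (hQ₁ : G₁.IsClique Q₁) (hQ₂ : G₂.IsClique Q₂)
    (hc₁ : Q₁.ncard = t) (hc₂ : Q₂.ncard = t)
    (C₁ : Set (Set V₁)) (C₂ : Set (Set V₂)) (hC₁ : Q₁ ∈ C₁) (hC₂ : Q₂ ∈ C₂)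
    (ι : V₁ → V₂) (hιQ : ∀ x ∈ Q₁, ι x ∈ Q₂) (hιinj : Set.InjOn ι Q₁)
    (hιsurj : ∀ y ∈ Q₂, ∃ x ∈ Q₁, ι x = y)
    (L₁ : V₁ → Finset ℕ) (L₂ : V₂ → Finset ℕ) (hL : ∀ x ∈ Q₁, L₁ x = L₂ (ι x))
    (G : SimpleGraph U) (e₁ : V₁ → U) (e₂ : V₂ → U)
    (he₁ : Function.Injective e₁) (he₂ : Function.Injective e₂)
    (hcover : ∀ u : U, (∃ x, e₁ x = u) ∨ (∃ y, e₂ y = u))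
    (hglue : ∀ (x : V₁) (y : V₂), e₁ x = e₂ y ↔ (x ∈ Q₁ ∧ ι x = y))
    (hadj1 : ∀ x x' : V₁, ¬(x ∈ Q₁ ∧ x' ∈ Q₁) → (G.Adj (e₁ x) (e₁ x') ↔ G₁.Adj x x'))
    (hadj2 : ∀ y y' : V₂, ¬(y ∈ Q₂ ∧ y' ∈ Q₂) → (G.Adj (e₂ y) (e₂ y') ↔ G₂.Adj y y'))
    (hnocross : ∀ (x : V₁) (y : V₂), x ∉ Q₁ → y ∉ Q₂ → ¬ G.Adj (e₁ x) (e₂ y))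
    (L : U → Finset ℕ) (hLe₁ : ∀ x : V₁, L (e₁ x) = L₁ x) (hLe₂ : ∀ y : V₂, L (e₂ y) = L₂ y)
    (t₁ t₂ : ℕ) (ht₁ : t ≤ t₁) (ht₂ : t ≤ t₂)
    (hext₁ : Extendable S G₁ C₁ L₁ t₁) (hext₂ : Extendable S G₂ C₂ L₂ t₂) :
    Extendable S G ((fun c => e₁ '' c) '' C₁ ∪ (fun c => e₂ '' c) '' C₂) L (min t₁ t₂) := by
  obtain rfl : L ∘ e₁ = L₁ := funext hLe₁
  obtain rfl : L ∘ e₂ = L₂ := funext hLe₂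
  exact stmt7_general (.of_glue hQ₁ hQ₂ hιsurj hιQ he₁ he₂ hcover hglue hadj1 hadj2 hnocross)
    hC₁ hC₂ (hc₁.trans_le ht₁) (hc₂.trans_le ht₂) hext₁ hext₂

end CFPaper
end

section
/- Let S be a set of positive integers and ξ a nonnegative integer. Let G be a finite simple graph, let T = (B_x : x ∈ V(T)) be a tree-decomposition of G with adhesion at most ξ, and let L be a list-assignment of G. If T is L-extendable, i.e. for every node x the torso R_x at x is (S, C_x, L|_{V(R_x)}, ξ)-extendable where C_x is the frame at x, then G is (S, ∅, L, ξ)-extendable. -/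
open SimpleGraph

universe u v

namespace CFPaper

variable {V : Type u} {W : Type v}

/-!
A clique `A` of `G` lies in a bag `B r`. Colour `B r` from `A`, then absorb the remaining nodes one
by one, each new node `y` being adjacent to a node `x` already absorbed. The bag `B y` meets the
union of the absorbed bags exactly in `B x ∩ B y`, a clique of size at most `ξ` of the torso at `y`,
so the colouring extends to `B y`. What the absorbed bags have reached at a vertex of this clique is
protected through the functions `f` and `g`: a colour achieved by the vertex is forbidden on its new
neighbours, which keeps the multiplicity of that colour; a forbidden colour stays forbidden; and a
vertex that has no neighbour yet achieves a colour within `B y`. Taking the compatible subgraph of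
the torso to be the set of its virtual edges makes colours count only along edges of `G`.
-/

section Trees

variable {α : Type*} {T : SimpleGraph α}

theorem connected_induce_insert {X : Set α} {x y : α} (hX : (T.induce X).Connected) (hx : x ∈ X)
    (hxy : T.Adj x y) : (T.induce (insert y X)).Connected :=
  connected_induce_union (s := {y}) .of_subsingleton hX.preconnected rfl hx hxy.symm

theorem induction_on_connected_insert [Finite α] (hT : T.Connected) (r : α) {P : Set α → Prop}
    (base : P {r})
    (step : ∀ X x y, (T.induce X).Connected → x ∈ X → y ∉ X → T.Adj x y → P X →
      P (insert y X)) :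
    P Set.univ := by
  let F : Set (Set α) := {X | r ∈ X ∧ (T.induce X).Connected ∧ P X}
  have hF : F.Nonempty := ⟨{r}, rfl, .of_subsingleton, base⟩
  obtain ⟨X, ⟨hr, hX, hP⟩, hmax⟩ := F.toFinite.exists_maximal hF
  by_contra huniv
  obtain ⟨z, hz⟩ := (Set.ne_univ_iff_exists_notMem X).1 fun h => huniv (h ▸ hP)
  obtain ⟨p⟩ := hT.preconnected r z
  obtain ⟨d, -, hx, hy⟩ := p.exists_boundary_dart X hr hz
  have hins : insert d.snd X ∈ F :=
    ⟨Or.inr hr, connected_induce_insert hX hx d.adj, step X _ _ hX hx hy d.adj hP⟩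
  exact hy (hmax hins (Set.subset_insert _ _) (Set.mem_insert _ _))

theorem exists_walk_support_subset {X : Set α} (hX : (T.induce X).Preconnected) {x y : α}
    (hx : x ∈ X) (hy : y ∈ X) : ∃ p : T.Walk x y, ∀ z ∈ p.support, z ∈ X := by
  obtain ⟨p⟩ := hX ⟨x, hx⟩ ⟨y, hy⟩
  refine ⟨p.map (Embedding.induce X).toHom, fun z hz => ?_⟩
  obtain ⟨z, -, rfl⟩ := List.mem_map.1 (Walk.support_map _ p ▸ hz)
  exact z.2

theorem mem_of_adj_of_preconnected (hT : T.IsAcyclic) {X Z : Set α}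
    (hX : (T.induce X).Preconnected) (hZ : (T.induce Z).Preconnected) {x y z : α} (hxy : T.Adj x y)
    (hx : x ∈ X) (hy : y ∉ X) (hzX : z ∈ X) (hzZ : z ∈ Z) (hyZ : y ∈ Z) : x ∈ Z := by
  obtain ⟨p, hp⟩ := exists_walk_support_subset hX hx hzX
  obtain ⟨q, hq⟩ := exists_walk_support_subset hZ hzZ hyZ
  have hbridge : s(x, y) ∈ (p.append q).edges :=
    isBridge_iff_forall_walk_mem_edges.1 (isAcyclic_iff_forall_adj_isBridge.1 hT hxy) _
  rcases List.mem_append.1 (Walk.edges_append p q ▸ hbridge) with h | h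
  · exact absurd (hp y (p.snd_mem_support_of_mem_edges h)) hy
  · exact hq x (q.fst_mem_support_of_mem_edges h)

theorem exists_forall_mem_of_pairwise_inter_nonempty [Finite α] (hT : T.IsTree) {κ : Type*}
    {Z : κ → Set α} (hZ : ∀ i, (T.induce (Z i)).Preconnected)
    (hinter : ∀ i j, (Z i ∩ Z j).Nonempty) : ∃ x, ∀ i, x ∈ Z i := by
  obtain ⟨r⟩ := hT.connected.nonempty
  suffices (∀ i j, ∃ x ∈ Set.univ, x ∈ Z i ∧ x ∈ Z j) → ∃ x ∈ Set.univ, ∀ i, x ∈ Z i by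
    simpa using this (by simpa [Set.Nonempty] using hinter)
  refine induction_on_connected_insert hT.connected r
    (P := fun X => (∀ i j, ∃ x ∈ X, x ∈ Z i ∧ x ∈ Z j) → ∃ x ∈ X, ∀ i, x ∈ Z i) ?_ ?_
  · intro h
    refine ⟨r, rfl, fun i => ?_⟩
    obtain ⟨_, rfl, hi, -⟩ := h i i
    exact hi
  intro X x y hX hx hy hxy ih h
  by_cases hyZ : ∀ i, y ∈ Z i
  · exact ⟨y, Or.inl rfl, hyZ⟩
  obtain ⟨k, hk⟩ := not_forall.1 hyZ
  have hmeet : ∀ i, ∃ z ∈ X, z ∈ Z i := fun i => by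
    obtain ⟨z, rfl | hz, hzi, hzk⟩ := h i k
    exacts [absurd hzk hk, ⟨z, hz, hzi⟩]
  have hxZ : ∀ i, y ∈ Z i → x ∈ Z i := fun i hyi => by
    obtain ⟨z, hz, hzi⟩ := hmeet i
    exact mem_of_adj_of_preconnected hT.isAcyclic hX.preconnected (hZ i) hxy hx hy hz hzi hyi
  obtain ⟨z, hz, hzZ⟩ := ih fun i j => by
    obtain ⟨z, rfl | hz, hzi, hzj⟩ := h i j
    exacts [⟨x, hx, hxZ i hzi, hxZ j hzj⟩, ⟨z, hz, hzi, hzj⟩]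
  exact ⟨z, Or.inr hz, hzZ⟩

end Trees

section Achieved

variable {S : Set ℕ} {Q Q' : SimpleGraph V} {φ φ' : V → ℕ} {w : V}

/-- The requirement which `Extendable` imposes at `w`, for the graph `Q` in place of `G \ H`: the
vertex `w` is isolated in `Q`, or `w` *achieves* a colour, whose multiplicity among the
`Q`-neighbours of `w` is in `S`. -/
def AchievedAt (S : Set ℕ) (Q : SimpleGraph V) (φ : V → ℕ) (w : V) : Prop :=
  Q.neighborSet w = ∅ ∨ ∃ c, {u | Q.Adj w u ∧ φ u = c}.ncard ∈ S

theorem AchievedAt.congr (h : AchievedAt S Q φ w) (hQ : ∀ u, Q.Adj w u ↔ Q'.Adj w u)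
    (hφ : ∀ u, Q.Adj w u → φ u = φ' u) : AchievedAt S Q' φ' w := by
  refine h.imp (fun h => ?_) (Exists.imp fun c hc => ?_)
  · rw [← h]
    exact Set.ext fun u => (hQ u).symm
  · convert hc using 2
    ext u
    simp only [Set.mem_ofPred_eq, ← hQ]
    exact and_congr_right fun hu => by rw [hφ u hu]

theorem AchievedAt.map {α : Type*} {Q : SimpleGraph α} {ψ : α → ℕ} {φ : V → ℕ} {w : α}
    (h : AchievedAt S Q ψ w) (e : α ↪ V) (hφ : ∀ u, φ (e u) = ψ u) :
    AchievedAt S (Q.map e) φ (e w) := by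
  refine h.imp (fun h => ?_) (Exists.imp fun c hc => ?_)
  · rw [neighborSet_map, h, Set.image_empty]
  · rw [← Set.ncard_image_of_injective _ e.injective] at hc
    convert hc using 2
    ext v
    simp only [Set.mem_ofPred_eq, map_adj, Set.mem_image]
    grind [e.injective.eq_iff]

end Achieved

section Extension

variable {S : Set ℕ} {G R R₁ R₂ : SimpleGraph V} {U A U₁ U₂ : Set V} {L : V → Finset ℕ}
  {φA f f' : V → ℕ} {g g' : V → Bool} {φ₁ φ₂ : V → ℕ}

/-- `φ` solves, on the vertex set `U`, the extension problem with data `A`, `φA`, `f`, `g` from the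
definition of `Extendable`: properness and the ban on `f` refer to `R`, which includes the virtual
edges, whereas colours have to be achieved in `G ⊓ R`. The values of `φ` outside `U` are
irrelevant. -/
structure IsExtension_s8 (S : Set ℕ) (G R : SimpleGraph V) (U : Set V) (L : V → Finset ℕ) (A : Set V)
    (φA f : V → ℕ) (g : V → Bool) (φ : V → ℕ) : Prop where
  mem_list : ∀ w ∈ U, φ w ∈ L w
  proper : Proper R φ
  eqOn : Set.EqOn φ φA A
  avoid : ∀ w ∈ A, g w = false → ∀ u, R.Adj w u → u ∉ A → φ u ≠ f w
  achieved : ∀ w ∈ U, (w ∉ A ∨ g w = true) → AchievedAt S (G ⊓ R) φ w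

/-- Every extension problem on `U` starting from a colouring of `A` that is proper for `R` has a
solution. This is `Extendable` for a single set `A` and a single deleted subgraph, for graphs living
on a vertex set `U` of the ambient type. -/
def ExtendsFrom (S : Set ℕ) (G R : SimpleGraph V) (U : Set V) (L : V → Finset ℕ) (A : Set V) :
    Prop :=
  ∀ φA : V → ℕ, (∀ w ∈ A, φA w ∈ L w) → (∀ a ∈ A, ∀ b ∈ A, R.Adj a b → φA a ≠ φA b) →
    ∀ (f : V → ℕ) (g : V → Bool), ∃ φ, IsExtension_s8 S G R U L A φA f g φ

/-- The requirements `f'`, `g'` at `w` for colouring a new part protect what the colouring `φ₁` of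
the old part `R₁` has reached at `w`: the ban on `f` is passed on, an achieved colour is banned so
that its multiplicity cannot change, and only a vertex isolated in `G ⊓ R₁` is left free. -/
structure Protects (S : Set ℕ) (G R₁ : SimpleGraph V) (A : Set V) (f : V → ℕ) (g : V → Bool)
    (φ₁ f' : V → ℕ) (g' : V → Bool) (w : V) : Prop where
  ban : w ∈ A → g w = false → g' w = false ∧ f' w = f w
  achieve : (w ∉ A ∨ g w = true) → ((G ⊓ R₁).neighborSet w).Nonempty →
    g' w = false ∧ {u | (G ⊓ R₁).Adj w u ∧ φ₁ u = f' w}.ncard ∈ S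
  free : (w ∉ A ∨ g w = true) → (G ⊓ R₁).neighborSet w = ∅ → g' w = true

theorem IsExtension_s8.exists_protects (h₁ : IsExtension_s8 S G R₁ U₁ L A φA f g φ₁) :
    ∃ f' g', ∀ w ∈ U₁, Protects S G R₁ A f g φ₁ f' g' w := by
  suffices ∀ w, ∃ p : ℕ × Bool, w ∈ U₁ →
      Protects S G R₁ A f g φ₁ (fun _ => p.1) (fun _ => p.2) w by
    choose p hp using this
    exact ⟨fun w => (p w).1, fun w => (p w).2, fun w hw =>
      ⟨(hp w hw).ban, (hp w hw).achieve, (hp w hw).free⟩⟩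
  intro w
  by_cases hfree : w ∉ A ∨ g w = true
  · have hban : w ∈ A → g w ≠ false := by grind
    by_cases hiso : (G ⊓ R₁).neighborSet w = ∅
    · exact ⟨(0, true), fun _ => ⟨fun hA hg => absurd hg (hban hA),
        fun _ hne => absurd hiso hne.ne_empty, fun _ _ => rfl⟩⟩
    · by_cases hw : w ∈ U₁
      · obtain ⟨c, hc⟩ := (h₁.achieved w hw hfree).resolve_left hiso
        exact ⟨(c, false), fun _ => ⟨fun hA hg => absurd hg (hban hA), fun _ _ => ⟨rfl, hc⟩,
          fun _ h => absurd h hiso⟩⟩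
      · exact ⟨(0, true), fun h => absurd h hw⟩
  · exact ⟨(f w, false), fun _ => ⟨fun _ _ => ⟨rfl, rfl⟩, fun h => absurd h hfree,
      fun h => absurd h hfree⟩⟩

theorem IsExtension_s8.ne_of_adj_of_not_adj
    (h₂ : IsExtension_s8 S G R₂ U₂ L (U₁ ∩ U₂) φ₁ f' g' φ₂) (hR₂ : R₂.support ⊆ U₂)
    (hR : ∀ a ∈ U₁, ∀ b ∈ U₁, R₂.Adj a b → R₁.Adj a b) {w u : V} (hw : w ∈ U₁)
    (hg' : g' w = false) (hwu : R₂.Adj w u) (hwu₁ : ¬ R₁.Adj w u) : φ₂ u ≠ f' w :=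
  h₂.avoid w ⟨hw, hR₂ ⟨u, hwu⟩⟩ hg' u hwu fun hu => hwu₁ (hR w hw u hu.1 hwu)

theorem IsExtension_s8.achievedAt_sup {φ : V → ℕ} (h₁ : IsExtension_s8 S G R₁ U₁ L A φA f g φ₁)
    (h₂ : IsExtension_s8 S G R₂ U₂ L (U₁ ∩ U₂) φ₁ f' g' φ₂)
    (hprot : ∀ w ∈ U₁, Protects S G R₁ A f g φ₁ f' g' w)
    (hR₁ : R₁.support ⊆ U₁) (hR₂ : R₂.support ⊆ U₂)
    (hR : ∀ a ∈ U₁, ∀ b ∈ U₁, R₂.Adj a b → R₁.Adj a b)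
    (hφ₁ : Set.EqOn φ φ₁ U₁) (hφ₂ : Set.EqOn φ φ₂ U₂)
    {w : V} (hw : w ∈ U₁ ∪ U₂) (hfree : w ∉ A ∨ g w = true) :
    AchievedAt S (G ⊓ (R₁ ⊔ R₂)) φ w := by
  have eq₁ : ∀ u, R₁.Adj w u → φ u = φ₁ u := fun u h => hφ₁ (hR₁ ⟨w, h.symm⟩)
  have eq₂ : ∀ u, R₂.Adj w u → φ u = φ₂ u := fun u h => hφ₂ (hR₂ ⟨w, h.symm⟩)
  simp only [inf_sup_left]
  by_cases hwU₂ : w ∈ U₂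
  · by_cases hiso : (G ⊓ R₁).neighborSet w = ∅
    · have hfree₂ : w ∉ U₁ ∩ U₂ ∨ g' w = true :=
        or_iff_not_imp_left.2 fun h => (hprot w (not_not.1 h).1).free hfree hiso
      refine (h₂.achieved w hwU₂ hfree₂).congr (fun u => ?_) fun u hu => (eq₂ u hu.2).symm
      exact (or_iff_right (Set.eq_empty_iff_forall_notMem.1 hiso u)).symm
    · obtain ⟨u₀, hu₀⟩ := Set.nonempty_iff_ne_empty.2 hiso
      have hwU₁ : w ∈ U₁ := hR₁ ⟨u₀, hu₀.2⟩
      obtain ⟨hg', hc⟩ := (hprot w hwU₁).achieve hfree ⟨u₀, hu₀⟩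
      refine Or.inr ⟨f' w, ?_⟩
      convert hc using 2
      ext u
      refine ⟨fun ⟨hwu, hu⟩ => ?_, fun ⟨hwu, hu⟩ => ⟨Or.inl hwu, (eq₁ u hwu.2).trans hu⟩⟩
      have hwu₁ : (G ⊓ R₁).Adj w u := hwu.elim id fun h => ⟨h.1, by
        by_contra hn
        exact h₂.ne_of_adj_of_not_adj hR₂ hR hwU₁ hg' h.2 hn ((eq₂ u h.2).symm.trans hu)⟩
      exact ⟨hwu₁, (eq₁ u hwu₁.2).symm.trans hu⟩
  · refine (h₁.achieved w (hw.resolve_right hwU₂) hfree).congr (fun u => ?_) fun u hu =>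
      (eq₁ u hu.2).symm
    exact (or_iff_left fun h : (G ⊓ R₂).Adj w u => hwU₂ (hR₂ ⟨u, h.2⟩)).symm

theorem IsExtension_s8.sup {φ : V → ℕ} (h₁ : IsExtension_s8 S G R₁ U₁ L A φA f g φ₁)
    (h₂ : IsExtension_s8 S G R₂ U₂ L (U₁ ∩ U₂) φ₁ f' g' φ₂)
    (hprot : ∀ w ∈ U₁, Protects S G R₁ A f g φ₁ f' g' w) (hA : A ⊆ U₁)
    (hR₁ : R₁.support ⊆ U₁) (hR₂ : R₂.support ⊆ U₂)
    (hR : ∀ a ∈ U₁, ∀ b ∈ U₁, R₂.Adj a b → R₁.Adj a b)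
    (hφ₁ : Set.EqOn φ φ₁ U₁) (hφ₂ : Set.EqOn φ φ₂ U₂) :
    IsExtension_s8 S G (R₁ ⊔ R₂) (U₁ ∪ U₂) L A φA f g φ where
  mem_list := by
    rintro w (hw | hw)
    · exact hφ₁ hw ▸ h₁.mem_list w hw
    · exact hφ₂ hw ▸ h₂.mem_list w hw
  proper := by
    rintro a b (hab | hab)
    · rw [hφ₁ (hR₁ ⟨b, hab⟩), hφ₁ (hR₁ ⟨a, hab.symm⟩)]
      exact h₁.proper hab
    · rw [hφ₂ (hR₂ ⟨b, hab⟩), hφ₂ (hR₂ ⟨a, hab.symm⟩)]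
      exact h₂.proper hab
  eqOn := (hφ₁.mono hA).trans h₁.eqOn
  avoid w hw hg u hwu hu := by
    obtain ⟨hg', hf'⟩ := (hprot w (hA hw)).ban hw hg
    by_cases hwu₁ : R₁.Adj w u
    · rw [hφ₁ (hR₁ ⟨w, hwu₁.symm⟩)]
      exact h₁.avoid w hw hg u hwu₁ hu
    · have hwu₂ : R₂.Adj w u := hwu.resolve_left hwu₁
      rw [hφ₂ (hR₂ ⟨w, hwu₂.symm⟩), ← hf']
      exact h₂.ne_of_adj_of_not_adj hR₂ hR (hA hw) hg' hwu₂ hwu₁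
  achieved _ := h₁.achievedAt_sup h₂ hprot hR₁ hR₂ hR hφ₁ hφ₂

theorem ExtendsFrom.sup (h₁ : ExtendsFrom S G R₁ U₁ L A)
    (h₂ : ExtendsFrom S G R₂ U₂ L (U₁ ∩ U₂)) (hA : A ⊆ U₁)
    (hR₁ : R₁.support ⊆ U₁) (hR₂ : R₂.support ⊆ U₂)
    (hR : ∀ a ∈ U₁, ∀ b ∈ U₁, R₂.Adj a b → R₁.Adj a b) :
    ExtendsFrom S G (R₁ ⊔ R₂) (U₁ ∪ U₂) L A := by
  classical
  intro φA hlist hproper f g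
  obtain ⟨φ₁, hφ₁⟩ := h₁ φA hlist (fun a ha b hb hab => hproper a ha b hb (Or.inl hab)) f g
  obtain ⟨f', g', hprot⟩ := hφ₁.exists_protects
  obtain ⟨φ₂, hφ₂⟩ := h₂ φ₁ (fun w hw => hφ₁.mem_list w hw.1)
    (fun a ha b hb hab => hφ₁.proper (hR a ha.1 b hb.1 hab)) f' g'
  have heq₂ : Set.EqOn (U₂.piecewise φ₂ φ₁) φ₂ U₂ := U₂.piecewise_eqOn φ₂ φ₁
  have heq₁ : Set.EqOn (U₂.piecewise φ₂ φ₁) φ₁ U₁ := fun v hv => by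
    by_cases hv₂ : v ∈ U₂
    · exact (heq₂ hv₂).trans (hφ₂.eqOn ⟨hv, hv₂⟩)
    · exact U₂.piecewise_eq_of_notMem φ₂ φ₁ hv₂
  exact ⟨_, hφ₁.sup hφ₂ hprot hA hR₁ hR₂ hR heq₁ heq₂⟩

theorem extendable_empty_of_extendsFrom {t : ℕ} (hGR : G ≤ R)
    (h : ∀ A : Set V, G.IsClique A → A.ncard ≤ t → ExtendsFrom S G R Set.univ L A) :
    Extendable S G ∅ L t := by
  intro A hA hcard H _ hH φA hlist hproper f g
  obtain rfl : H = ⊥ := eq_bot_iff.2 fun a b hab => absurd (hH hab) (by simp)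
  obtain ⟨φ, hφ⟩ := h A hA hcard φA hlist
    (fun a ha b hb hab => hproper a ha b hb (hA ha hb hab.ne)) f g
  refine ⟨φ, fun w => hφ.mem_list w trivial, fun a b hab => hφ.proper (hGR hab), hφ.eqOn,
    fun w hw hg u hwu => hφ.avoid w hw hg u (hGR hwu), fun w hfree => ?_⟩
  rw [sdiff_bot, ← inf_eq_left.2 hGR]
  exact hφ.achieved w trivial (hfree.imp_right And.right)

theorem spanningCoe_inf_induce (R : SimpleGraph U) :
    (R ⊓ G.induce U).spanningCoe = G ⊓ R.spanningCoe := by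
  ext a b
  simp only [map_adj, inf_adj, comap_adj, Function.Embedding.subtype_apply]
  grind

theorem Extendable.extendsFrom_spanningCoe {R : SimpleGraph U} {C : Set (Set U)} {t : ℕ}
    (h : Extendable S R C (fun a => L a) t) (hC : Compatible C (R \ G.induce U)) (hAU : A ⊆ U)
    (hA : R.spanningCoe.IsClique A) (hcard : A.ncard ≤ t) :
    ExtendsFrom S G R.spanningCoe U L A := by
  intro φA hlist hproper f g
  have hadj : ∀ {a b : U}, R.spanningCoe.Adj a b ↔ R.Adj a b :=
    (Embedding.spanningCoe R).map_adj_iff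
  have hsupp : ∀ {a b : V}, R.spanningCoe.Adj a b → a ∈ U ∧ b ∈ U := by
    rintro _ _ ⟨-, a, b, -, rfl, rfl⟩
    exact ⟨a.2, b.2⟩
  have hcard' : (Subtype.val ⁻¹' A : Set U).ncard ≤ t :=
    (Set.ncard_preimage_of_injective_subset_range Subtype.val_injective (by simpa)).trans_le hcard
  obtain ⟨ψ, hψL, hψ, hψA, hψf, hψS⟩ := h (Subtype.val ⁻¹' A)
    (fun a ha b hb hab => hadj.1 (hA ha hb (Subtype.coe_injective.ne hab))) hcard'
    (R \ G.induce U) sdiff_le hC (φA ·) (fun w => hlist w)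
    (fun a ha b hb hab => hproper a ha b hb (hadj.2 hab)) (f ·) (g ·)
  let φ : V → ℕ := Function.extend Subtype.val ψ φA
  have hφ : ∀ a : U, φ a = ψ a := fun a => Subtype.val_injective.extend_apply ψ φA a
  refine ⟨φ, fun w hw => ?_, fun a b hab => ?_, fun w hw => ?_, fun w hw hg u hwu hu => ?_,
    fun w hw hfree => ?_⟩
  · exact hφ ⟨w, hw⟩ ▸ hψL ⟨w, hw⟩
  · lift a to U using (hsupp hab).1
    lift b to U using (hsupp hab).2
    rw [hφ, hφ]
    exact hψ (hadj.1 hab)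
  · exact (hφ ⟨w, hAU hw⟩).trans (hψA ⟨w, hAU hw⟩ hw)
  · lift w to U using hAU hw
    lift u to U using (hsupp hwu).2
    rw [hφ]
    exact hψf w hw hg u (hadj.1 hwu) hu
  · lift w to U using hw
    rw [← spanningCoe_inf_induce, ← sdiff_sdiff_right_self]
    have hfree' : w ∉ Subtype.val ⁻¹' A ∨ w ∈ Subtype.val ⁻¹' A ∧ g w = true :=
      (em _).symm.imp_right fun hA => ⟨hA, hfree.resolve_left (not_not.2 hA)⟩
    exact AchievedAt.map (hψS w hfree') (.subtype _) hφ

end Extension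

section TreeDecomposition

variable {S : Set ℕ} {G : SimpleGraph V} {ι : Type*} {T : SimpleGraph ι} {B : ι → Set V} {ξ : ℕ}
  {L : V → Finset ℕ} {A : Set V}

theorem IsTreeDecomp.exists_mem (h : IsTreeDecomp G T B) (v : V) : ∃ x, v ∈ B x :=
  let ⟨x, hx⟩ := (h.bags_connected v).nonempty
  ⟨x, hx⟩

theorem IsTreeDecomp.exists_subset_bag [Finite ι] (h : IsTreeDecomp G T B) (hA : G.IsClique A) :
    ∃ x, A ⊆ B x := by
  obtain ⟨x, hx⟩ := exists_forall_mem_of_pairwise_inter_nonempty h.tree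
    (Z := fun a : A => {x | (a : V) ∈ B x}) (fun a => (h.bags_connected a).preconnected)
    fun a b => by
      by_cases hab : a = b
      · obtain ⟨x, hx⟩ := h.exists_mem a
        exact ⟨x, hx, hab ▸ hx⟩
      · exact h.edge_in_bag (hA a.2 b.2 (Subtype.coe_injective.ne hab))
  exact ⟨x, fun a ha => hx ⟨a, ha⟩⟩

theorem IsTreeDecomp.iUnion_inter_bag (h : IsTreeDecomp G T B) {X : Set ι} {x y : ι}
    (hX : (T.induce X).Connected) (hx : x ∈ X) (hy : y ∉ X) (hxy : T.Adj x y) :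
    (⋃ z ∈ X, B z) ∩ B y = B x ∩ B y := by
  refine Set.Subset.antisymm ?_ (Set.inter_subset_inter_left _ (Set.subset_biUnion_of_mem hx))
  rintro v ⟨hv, hvy⟩
  obtain ⟨z, hz, hvz⟩ := Set.mem_iUnion₂.1 hv
  exact ⟨mem_of_adj_of_preconnected h.tree.isAcyclic hX.preconnected
    (h.bags_connected v).preconnected hxy hx hy hz hvz hvy, hvy⟩

theorem spanningCoe_torso_adj {x : ι} {a b : V} :
    (torso G T B x).spanningCoe.Adj a b ↔ a ∈ B x ∧ b ∈ B x ∧ a ≠ b ∧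
      (G.Adj a b ∨ ∃ y, T.Adj x y ∧ a ∈ B y ∧ b ∈ B y) := by
  simp only [torso, map_adj, fromRel_adj, Function.Embedding.subtype_apply, Subtype.exists]
  grind [G.adj_comm]

theorem isClique_inter_spanningCoe_torso {x y : ι} (hxy : T.Adj x y) :
    (torso G T B x).spanningCoe.IsClique (B x ∩ B y) :=
  fun _ ha _ hb hab => spanningCoe_torso_adj.2 ⟨ha.1, hb.1, hab, Or.inr ⟨y, hxy, ha.2, hb.2⟩⟩

theorem compatible_frame_torso_sdiff (x : ι) :
    Compatible (frame G T B x) (torso G T B x \ G.induce (B x)) := by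
  intro a b hab
  obtain ⟨hR, hG⟩ := (sdiff_adj _ _ a b).1 hab
  obtain ⟨-, -, -, h⟩ := spanningCoe_torso_adj.1 ((Embedding.spanningCoe _).map_adj_iff.2 hR)
  obtain ⟨y, hxy, ha, hb⟩ := h.resolve_left hG
  exact ⟨_, ⟨y, hxy, rfl⟩, ha, hb⟩

/-- The union of the torsos at the nodes in `X`, as a graph on all of `V`. -/
def torsoUnion (G : SimpleGraph V) (T : SimpleGraph ι) (B : ι → Set V) (X : Set ι) :
    SimpleGraph V :=
  ⨆ x ∈ X, (torso G T B x).spanningCoe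

theorem torsoUnion_adj {X : Set ι} {a b : V} :
    (torsoUnion G T B X).Adj a b ↔ ∃ x ∈ X, (torso G T B x).spanningCoe.Adj a b := by
  simp [torsoUnion]

theorem torsoUnion_singleton (x : ι) :
    torsoUnion G T B {x} = (torso G T B x).spanningCoe :=
  iSup_singleton

theorem torsoUnion_insert (X : Set ι) (y : ι) :
    torsoUnion G T B (insert y X) = torsoUnion G T B X ⊔ (torso G T B y).spanningCoe :=
  iSup_insert.trans (sup_comm _ _)

theorem support_torsoUnion_subset (X : Set ι) :
    (torsoUnion G T B X).support ⊆ ⋃ x ∈ X, B x := by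
  rintro a ⟨b, hab⟩
  obtain ⟨x, hx, hab⟩ := torsoUnion_adj.1 hab
  exact Set.mem_biUnion hx (spanningCoe_torso_adj.1 hab).1

theorem IsTreeDecomp.le_torsoUnion_univ (h : IsTreeDecomp G T B) :
    G ≤ torsoUnion G T B Set.univ := fun a b hab => by
  obtain ⟨x, ha, hb⟩ := h.edge_in_bag hab
  exact torsoUnion_adj.2 ⟨x, trivial, spanningCoe_torso_adj.2 ⟨ha, hb, hab.ne, Or.inl hab⟩⟩

theorem ExtendsFrom.insert_node (hTD : IsTreeDecomp G T B) {X : Set ι} {x y : ι}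
    (hX : (T.induce X).Connected) (hx : x ∈ X) (hy : y ∉ X) (hxy : T.Adj x y)
    (hadh : (B x ∩ B y).ncard ≤ ξ)
    (hext : Extendable S (torso G T B y) (frame G T B y) (fun a => L a) ξ)
    (hA : A ⊆ ⋃ z ∈ X, B z) (h : ExtendsFrom S G (torsoUnion G T B X) (⋃ z ∈ X, B z) L A) :
    ExtendsFrom S G (torsoUnion G T B (insert y X)) (⋃ z ∈ insert y X, B z) L A := by
  have hsep := hTD.iUnion_inter_bag hX hx hy hxy
  have hsupp : (torso G T B y).spanningCoe.support ⊆ B y := by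
    rintro a ⟨b, hab⟩
    exact (spanningCoe_torso_adj.1 hab).1
  have hold : ∀ a ∈ ⋃ z ∈ X, B z, ∀ b ∈ ⋃ z ∈ X, B z, (torso G T B y).spanningCoe.Adj a b →
      (torsoUnion G T B X).Adj a b := fun a ha b hb hab => by
    obtain ⟨hay, hby, hne, -⟩ := spanningCoe_torso_adj.1 hab
    exact torsoUnion_adj.2 ⟨x, hx, isClique_inter_spanningCoe_torso hxy
      (hsep.subset ⟨ha, hay⟩) (hsep.subset ⟨hb, hby⟩) hne⟩
  rw [torsoUnion_insert, Set.biUnion_insert, Set.union_comm]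
  refine h.sup ?_ hA (support_torsoUnion_subset X) hsupp hold
  rw [hsep]
  refine hext.extendsFrom_spanningCoe (compatible_frame_torso_sdiff y) Set.inter_subset_right ?_
    hadh
  rw [Set.inter_comm]
  exact isClique_inter_spanningCoe_torso hxy.symm

theorem extendsFrom_torsoUnion_univ [Finite ι] (hTD : IsTreeDecomp G T B)
    (hadh : ∀ ⦃x y : ι⦄, T.Adj x y → (B x ∩ B y).ncard ≤ ξ)
    (hext : ∀ x, Extendable S (torso G T B x) (frame G T B x) (fun a => L a) ξ)
    (hA : G.IsClique A) (hcard : A.ncard ≤ ξ) :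
    ExtendsFrom S G (torsoUnion G T B Set.univ) Set.univ L A := by
  obtain ⟨r, hr⟩ := hTD.exists_subset_bag hA
  suffices A ⊆ ⋃ x ∈ Set.univ, B x ∧
      ExtendsFrom S G (torsoUnion G T B Set.univ) (⋃ x ∈ Set.univ, B x) L A by
    have hcover : ⋃ x ∈ Set.univ, B x = Set.univ := by
      simpa [Set.eq_univ_iff_forall] using hTD.exists_mem
    exact hcover ▸ this.2
  refine induction_on_connected_insert hTD.tree.connected r
    (P := fun X => A ⊆ ⋃ x ∈ X, B x ∧ ExtendsFrom S G (torsoUnion G T B X) (⋃ x ∈ X, B x) L A)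
    ⟨by simpa using hr, ?_⟩ ?_
  · rw [torsoUnion_singleton, Set.biUnion_singleton]
    exact (hext r).extendsFrom_spanningCoe (compatible_frame_torso_sdiff r) hr
      (fun a ha b hb hab => spanningCoe_torso_adj.2 ⟨hr ha, hr hb, hab, Or.inl (hA ha hb hab)⟩)
      hcard
  · rintro X x y hX hx hy hxy ⟨hAX, h⟩
    exact ⟨hAX.trans (Set.biUnion_mono (Set.subset_insert y X) fun _ _ => subset_rfl),
      h.insert_node hTD hX hx hy hxy (hadh hxy) (hext y) hAX⟩

-- For infinite `V`, `ncard` assigns size `0` to infinite cliques, adhesion sets and colour classes.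
theorem stmt8_general [Finite ι] (hTD : IsTreeDecomp G T B)
    (hadh : ∀ ⦃x y : ι⦄, T.Adj x y → (B x ∩ B y).ncard ≤ ξ)
    (hext : ∀ x, Extendable S (torso G T B x) (frame G T B x) (fun a => L a) ξ) :
    Extendable S G ∅ L ξ :=
  extendable_empty_of_extendsFrom hTD.le_torsoUnion_univ fun _ hA hcard =>
    extendsFrom_torsoUnion_univ hTD hadh hext hA hcard

end TreeDecomposition

theorem stmt8 (S : Set ℕ) (hSpos : ∀ s ∈ S, 0 < s) (ξ : ℕ)
    (V : Type) [Fintype V] (G : SimpleGraph V)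
    (ι : Type) [Fintype ι] (T : SimpleGraph ι) (B : ι → Set V)
    (hTD : IsTreeDecomp G T B)
    (hadh : ∀ ⦃x y : ι⦄, T.Adj x y → (B x ∩ B y).ncard ≤ ξ)
    (L : V → Finset ℕ)
    (hext : ∀ x : ι, Extendable S (torso G T B x) (frame G T B x) (fun a => L (a : V)) ξ) :
    Extendable S G (∅ : Set (Set V)) L ξ :=
  stmt8_general hTD hadh hext

end CFPaper
end

section
/- Let S be a set of positive integers with 1 ∈ S, let G be a finite simple graph, let k and c be nonnegative integers, and let Y ⊆ V(G) with |Y| ≤ k. If G−X is S-achieved c-choosable (respectively, properly S-achieved c-colorable) for every set X with Y ⊆ X ⊆ V(G) and |X| ≤ 2|Y|, then G is S-achieved (c+2k)-choosable (respectively, properly S-achieved (c+2k)-colorable). -/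
open SimpleGraph

universe u v

namespace CFPaper

variable {V : Type u} {W : Type v}

/-!
Each vertex of `Y` that is not isolated contributes one of its neighbors, giving `X ⊇ Y` with
`|X| ≤ 2|Y|` in which every non-isolated vertex of `X` has a neighbor inside `X`. Give the vertices
of `X` colors that occur nowhere else in `G`, and color `G - X` by hypothesis. A vertex with a
neighbor in `X` then sees the color of that neighbor exactly once, and `1 ∈ S`; every other
non-isolated vertex lies outside `X` together with its whole neighborhood, so the coloring of
`G - X` achieves it.
-/

/-- The vertex sets `X` such that no non-isolated vertex of `G` lying in `X` becomes isolated in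
the subgraph induced by `X`. If such an `X` is colored with private colors, every non-isolated
vertex of `X` sees one of these colors. -/
def PreservesNonisolated (G : SimpleGraph V) (X : Set V) : Prop :=
  ∀ v ∈ X, (G.neighborSet v).Nonempty → (G.neighborSet v ∩ X).Nonempty

/-- The coloring `φ` gives each vertex of `X` a private color, one used by no other vertex of the
graph, inside or outside `X`. -/
def PrivatelyColors (φ : V → ℕ) (X : Set V) : Prop :=
  ∀ ⦃x⦄, x ∈ X → ∀ ⦃u⦄, φ u = φ x → u = x

theorem exists_preservesNonisolated_superset (G : SimpleGraph V) (Y : Set V) :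
    ∃ X, Y ⊆ X ∧ X.encard ≤ 2 * Y.encard ∧ PreservesNonisolated G X := by
  have exists_neighbor : ∀ v, (G.neighborSet v).Nonempty → ∃ u, G.Adj v u := fun _ h => h
  choose! n adj_n using exists_neighbor
  let Z : Set V := {y ∈ Y | (G.neighborSet y).Nonempty}
  refine ⟨Y ∪ n '' Z, Set.subset_union_left, ?_, ?_⟩
  · calc (Y ∪ n '' Z).encard ≤ Y.encard + (n '' Z).encard := Set.encard_union_le _ _
      _ ≤ Y.encard + Y.encard := add_le_add le_rfl <|
        (Set.encard_image_le n Z).trans (Set.encard_le_encard (Set.sep_subset _ _))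
      _ = 2 * Y.encard := (two_mul _).symm
  · rintro v (hv | ⟨y, ⟨hyY, hy⟩, rfl⟩) h
    · exact ⟨n v, adj_n v h, Or.inr ⟨v, ⟨hv, h⟩, rfl⟩⟩
    · exact ⟨y, (adj_n y hy).symm, Or.inl hyY⟩

section Gluing

variable {S : Set ℕ} {G : SimpleGraph V} {φ : V → ℕ} {X : Set V}

theorem Proper.of_induce_compl (hφ : PrivatelyColors φ X)
    (h : Proper (G.induce Xᶜ) fun v => φ v) : Proper G φ := by
  intro u w huw heq
  by_cases hw : w ∈ X
  · exact huw.ne (hφ hw heq)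
  by_cases hu : u ∈ X
  · exact huw.ne' (hφ hu heq.symm)
  exact h (u := ⟨u, hu⟩) (w := ⟨w, hw⟩) huw heq

theorem PrivatelyColors.ncard_neighbors_eq_one (hφ : PrivatelyColors φ X) {v x : V} (hx : x ∈ X)
    (hvx : G.Adj v x) : {u | G.Adj v u ∧ φ u = φ x}.ncard = 1 := by
  rw [Set.ncard_eq_one]
  refine ⟨x, Set.Subset.antisymm (fun u hu => hφ hx hu.2) ?_⟩
  rintro _ rfl
  exact ⟨hvx, rfl⟩

theorem ncard_neighbors_induce {A : Set V} {v : A} (hv : G.neighborSet v ⊆ A) (φ : V → ℕ) (c : ℕ) :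
    {u : A | (G.induce A).Adj v u ∧ φ u = c}.ncard = {u | G.Adj v u ∧ φ u = c}.ncard := by
  rw [← Set.ncard_image_of_injective _ Subtype.val_injective]
  congr 1
  ext u
  constructor
  · rintro ⟨u, hu, rfl⟩
    exact hu
  · exact fun hu => ⟨⟨u, hv hu.1⟩, hu, rfl⟩

theorem SAchieved.of_induce_compl (h1 : 1 ∈ S) (hX : PreservesNonisolated G X)
    (hφ : PrivatelyColors φ X) (h : SAchieved S (G.induce Xᶜ) fun v => φ v) :
    SAchieved S G φ := by
  intro v hv
  by_cases hvX : (G.neighborSet v ∩ X).Nonempty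
  · obtain ⟨x, hvx, hx⟩ := hvX
    exact ⟨1, h1, φ x, hφ.ncard_neighbors_eq_one hx hvx⟩
  · have v_notMem : v ∉ X := fun hvmem => hvX (hX v hvmem hv)
    have neighbors_subset : G.neighborSet v ⊆ Xᶜ := fun u hvu hu => hvX ⟨u, hvu, hu⟩
    obtain ⟨u, hvu⟩ := hv
    obtain ⟨s, hs, c, hc⟩ := h ⟨v, v_notMem⟩ ⟨⟨u, neighbors_subset hvu⟩, hvu⟩
    exact ⟨s, hs, c, (ncard_neighbors_induce neighbors_subset φ c).symm.trans hc⟩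

theorem exists_privatelyColors_extension {ψ : X → ℕ} {χ : ↥Xᶜ → ℕ} (hψ : Function.Injective ψ)
    (hψχ : ∀ (x : X) (v : ↥Xᶜ), ψ x ≠ χ v) :
    ∃ φ : V → ℕ, (∀ x : X, φ x = ψ x) ∧ (∀ v : ↥Xᶜ, φ v = χ v) ∧ PrivatelyColors φ X := by
  classical
  let φ : V → ℕ := Sum.elim ψ χ ∘ (Equiv.Set.sumCompl X).symm
  have φ_inside (x : X) : φ x = ψ x := by simp [φ]
  have φ_outside (v : ↥Xᶜ) : φ v = χ v := by simp [φ]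
  refine ⟨φ, φ_inside, φ_outside, fun x hx u hux => ?_⟩
  rw [φ_inside ⟨x, hx⟩] at hux
  by_cases hu : u ∈ X
  · exact congrArg Subtype.val (hψ ((φ_inside ⟨u, hu⟩).symm.trans hux))
  · exact absurd (hux.symm.trans (φ_outside ⟨u, hu⟩)) (hψχ _ _)

theorem exists_proper_sAchieved_of_induce_compl (h1 : 1 ∈ S) (hX : PreservesNonisolated G X)
    {L : V → Finset ℕ} {ψ : X → ℕ} {χ : ↥Xᶜ → ℕ} (hψL : ∀ x : X, ψ x ∈ L x)
    (hχL : ∀ v : ↥Xᶜ, χ v ∈ L v) (hψ : Function.Injective ψ)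
    (hψχ : ∀ (x : X) (v : ↥Xᶜ), ψ x ≠ χ v)
    (hχ : Proper (G.induce Xᶜ) χ) (hχS : SAchieved S (G.induce Xᶜ) χ) :
    ∃ φ : V → ℕ, (∀ v, φ v ∈ L v) ∧ Proper G φ ∧ SAchieved S G φ := by
  obtain ⟨φ, φ_inside, φ_outside, hφ⟩ := exists_privatelyColors_extension hψ hψχ
  obtain rfl : (fun v : ↥Xᶜ => φ v) = χ := funext φ_outside
  refine ⟨φ, fun v => ?_, .of_induce_compl hφ hχ, .of_induce_compl h1 hX hφ hχS⟩
  by_cases hv : v ∈ X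
  · exact φ_inside ⟨v, hv⟩ ▸ hψL ⟨v, hv⟩
  · exact hχL ⟨v, hv⟩

end Gluing

theorem exists_injective_mem_of_card_le {ι α : Type*} [Fintype ι] (t : ι → Finset α)
    (h : ∀ i, Fintype.card ι ≤ (t i).card) :
    ∃ f : ι → α, Function.Injective f ∧ ∀ i, f i ∈ t i := by
  classical
  rw [← Finset.all_card_le_biUnion_card_iff_exists_injective]
  intro s
  obtain rfl | ⟨i, hi⟩ := s.eq_empty_or_nonempty
  · simp
  · calc s.card ≤ Fintype.card ι := s.card_le_univ
      _ ≤ (t i).card := h i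
      _ ≤ (s.biUnion t).card := Finset.card_le_card (Finset.subset_biUnion_of_mem t hi)

section Removal

variable {S : Set ℕ} {G : SimpleGraph V} {X : Set V} {c : ℕ}

theorem SChoosable.mono {t t' : ℕ} (htt' : t ≤ t') (h : SChoosable S G t) : SChoosable S G t' :=
  fun L hL => h L fun v => htt'.trans (hL v)

theorem SColorable.mono {t t' : ℕ} (htt' : t ≤ t') (h : SColorable S G t) : SColorable S G t' := by
  obtain ⟨φ, hφt, hφ⟩ := h
  exact ⟨φ, fun v => Finset.Icc_subset_Icc_right htt' (hφt v), hφ⟩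

theorem SChoosable.of_induce_compl [Fintype X] (h1 : 1 ∈ S) (hX : PreservesNonisolated G X)
    (h : SChoosable S (G.induce Xᶜ) c) : SChoosable S G (c + Fintype.card X) := by
  intro L hL
  obtain ⟨ψ, hψ, hψL⟩ := exists_injective_mem_of_card_le (fun x : X => L x)
    fun x => (Nat.le_add_left _ _).trans (hL x)
  let usedColors : Finset ℕ := Finset.univ.image ψ
  have card_usedColors : usedColors.card ≤ Fintype.card X := Finset.card_image_le
  have le_card_sdiff (v : ↥Xᶜ) : c ≤ (L v \ usedColors).card := by
    have := Finset.le_card_sdiff usedColors (L v)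
    have := hL v
    omega
  obtain ⟨χ, hχL, hχ, hχS⟩ := h _ le_card_sdiff
  have hψχ (x : X) (v : ↥Xᶜ) : ψ x ≠ χ v := fun heq =>
    (Finset.mem_sdiff.mp (hχL v)).2 (heq ▸ Finset.mem_image_of_mem ψ (Finset.mem_univ x))
  exact exists_proper_sAchieved_of_induce_compl h1 hX hψL
    (fun v => (Finset.mem_sdiff.mp (hχL v)).1) hψ hψχ hχ hχS

theorem SColorable.of_induce_compl [Fintype X] (h1 : 1 ∈ S) (hX : PreservesNonisolated G X)
    (h : SColorable S (G.induce Xᶜ) c) : SColorable S G (c + Fintype.card X) := by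
  obtain ⟨χ, hχc, hχ, hχS⟩ := h
  let ψ (x : X) : ℕ := c + 1 + Fintype.equivFin X x
  have hψ : Function.Injective ψ := fun x y hxy =>
    (Fintype.equivFin X).injective (Fin.ext (Nat.add_left_cancel hxy))
  have ψ_mem (x : X) : ψ x ∈ Finset.Icc (c + 1) (c + Fintype.card X) := by
    rw [Finset.mem_Icc]
    have := (Fintype.equivFin X x).isLt
    grind
  have hψχ (x : X) (v : ↥Xᶜ) : ψ x ≠ χ v :=
    ((Finset.mem_Icc.mp (hχc v)).2.trans_lt (Finset.mem_Icc.mp (ψ_mem x)).1).ne'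
  exact exists_proper_sAchieved_of_induce_compl h1 hX
    (fun x => Finset.Icc_subset_Icc_left (Nat.le_add_left 1 c) (ψ_mem x))
    (fun v => Finset.Icc_subset_Icc_right (Nat.le_add_right c _) (hχc v)) hψ hψχ hχ hχS

end Removal

theorem stmt12_general {S : Set ℕ} (h1 : 1 ∈ S) (G : SimpleGraph V) {k : ℕ} (c : ℕ)
    {Y : Set V} (hY : Y.encard ≤ k) :
    ((∀ X : Set V, Y ⊆ X → X.encard ≤ 2 * Y.encard → SChoosable S (G.induce Xᶜ) c) →
      SChoosable S G (c + 2 * k)) ∧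
    ((∀ X : Set V, Y ⊆ X → X.encard ≤ 2 * Y.encard → SColorable S (G.induce Xᶜ) c) →
      SColorable S G (c + 2 * k)) := by
  obtain ⟨X, hYX, hXY, hX⟩ := exists_preservesNonisolated_superset G Y
  have encard_le : X.encard ≤ (2 * k : ℕ) := by
    push_cast
    exact hXY.trans (by gcongr)
  have := (Set.finite_of_encard_le_coe encard_le).fintype
  have card_le : Fintype.card X ≤ 2 * k := by
    rwa [Set.encard_eq_coe_toFinset_card, Nat.cast_le, Set.toFinset_card] at encard_le
  exact ⟨fun h => (SChoosable.of_induce_compl h1 hX (h X hYX hXY)).mono (by gcongr),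
    fun h => (SColorable.of_induce_compl h1 hX (h X hYX hXY)).mono (by gcongr)⟩

theorem stmt12 (S : Set ℕ) (hSpos : ∀ s ∈ S, 0 < s) (h1 : 1 ∈ S)
    (V : Type) [Fintype V] (G : SimpleGraph V) (k c : ℕ)
    (Y : Set V) (hY : Y.ncard ≤ k) :
    ((∀ X : Set V, Y ⊆ X → X.ncard ≤ 2 * Y.ncard → SChoosable S (G.induce Xᶜ) c) →
      SChoosable S G (c + 2 * k)) ∧
    ((∀ X : Set V, Y ⊆ X → X.ncard ≤ 2 * Y.ncard → SColorable S (G.induce Xᶜ) c) →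
      SColorable S G (c + 2 * k)) := by
  have encard_eq (A : Set V) : A.encard = A.ncard := A.toFinite.cast_ncard_eq.symm
  simpa only [encard_eq, ← Nat.cast_ofNat (R := ℕ∞), ← Nat.cast_mul, Nat.cast_le]
    using stmt12_general h1 G c (Y := Y) (by rwa [encard_eq, Nat.cast_le])

end CFPaper
end

section
/- Let d ≥ 1 be a real number. If G is a finite simple graph that has at most d vertices of degree at least d, then G is conflict-free (4d−1)-choosable. -/
open SimpleGraph

universe u v

namespace CFPaper

variable {V : Type u} {W : Type v}

/-! Fix a neighbor `g w` of each non-isolated vertex `w`, and forbid the color of `g w` on the other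
neighbors of `w`. These constraints and properness amount to a proper coloring of a graph `H ⊇ G`,
which is found greedily along a well-order that starts with the high-degree vertices. If `g w` is
the *least* neighbor of `w`, then a low-degree vertex `v` has at most two earlier `H`-neighbors for
each `w` adjacent to `v`, namely `w` and `g w`, while for a high-degree vertex it suffices to count
the high-degree vertices themselves. -/

theorem Proper.mono {G H : SimpleGraph V} {φ : V → ℕ} (hGH : G ≤ H) (hφ : Proper H φ) :
    Proper G φ :=
  fun _ _ huv ↦ hφ (hGH huv)

theorem exists_proper_of_encard_earlier_lt [LinearOrder V] [WellFoundedLT V] {H : SimpleGraph V}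
    {L : V → Finset ℕ} (hL : ∀ v, {u | u < v ∧ H.Adj v u}.encard < (L v).card) :
    ∃ φ : V → ℕ, (∀ v, φ v ∈ L v) ∧ Proper H φ := by
  have exists_avoiding (v : V) (ψ : ∀ u, u < v → ℕ) :
      ∃ c ∈ L v, ∀ u (hu : u < v), H.Adj v u → ψ u hu ≠ c := by
    let earlier := {u | u < v ∧ H.Adj v u}
    have hlt : (Set.range fun u : earlier ↦ ψ u u.2.1).encard < (L v : Set ℕ).encard := by
      rw [Set.encard_coe_eq_coe_finsetCard, ← Set.image_univ]
      refine (Set.encard_image_le _ _).trans_lt ?_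
      rw [Set.encard_univ]
      exact hL v
    obtain ⟨c, hcL, hc⟩ := Set.not_subset.mp fun hsub ↦ hlt.not_ge (Set.encard_le_encard hsub)
    exact ⟨c, hcL, fun u hu huv h ↦ hc ⟨⟨u, hu, huv⟩, h⟩⟩
  choose color hmem hne using exists_avoiding
  let φ : V → ℕ := wellFounded_lt.fix color
  have hφ (v : V) : φ v = color v fun u _ ↦ φ u := wellFounded_lt.fix_eq color v
  have hearlier ⦃u v : V⦄ (huv : u < v) (hadj : H.Adj v u) : φ u ≠ φ v := by
    rw [hφ v]
    exact hne v (fun u _ ↦ φ u) u huv hadj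
  refine ⟨φ, fun v ↦ hφ v ▸ hmem v _, fun u v huv ↦ ?_⟩
  obtain hlt | hlt := huv.ne.lt_or_gt
  · exact hearlier hlt huv.symm
  · exact (hearlier hlt huv).symm

theorem exists_wellOrder_isLowerSet (S : Set V) :
    ∃ _ : LinearOrder V, WellFoundedLT V ∧ IsLowerSet S := by
  let r (a b : V) : Prop := a ∈ S ∧ b ∉ S
  have : IsWellFounded V r := ⟨⟨fun b ↦ ⟨b, fun a hab ↦ ⟨a, fun _ hca ↦ absurd hab.1 hca.2⟩⟩⟩⟩
  let := IsWellFounded.wellOrderExtension r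
  refine ⟨this, IsWellFounded.wellOrderExtension.isWellFounded_lt r, fun a b hba ha ↦ ?_⟩
  by_contra hb
  have hab : a < b := Prod.Lex.left _ _ (IsWellFounded.rank_lt_of_rel ⟨ha, hb⟩)
  exact hab.not_ge hba

/-- The graph obtained from `G` by joining, for every vertex `w`, the vertex `g w` to all other
neighbors of `w`. When `g w` is a neighbor of `w`, a proper coloring of this graph makes the color
of `g w` unique among the neighbors of `w`. -/
def witnessGraph (G : SimpleGraph V) (g : V → V) : SimpleGraph V :=
  G ⊔ SimpleGraph.fromRel fun u v ↦ ∃ w, G.Adj w u ∧ g w = v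

section witnessGraph

variable {G : SimpleGraph V} {g : V → V} {φ : V → ℕ}

theorem Proper.conflictFree_of_witnessGraph (hφ : Proper (witnessGraph G g) φ)
    (hg : ∀ w, (G.neighborSet w).Nonempty → G.Adj w (g w)) : ConflictFree G φ := by
  refine fun w hw ↦ ⟨φ (g w), Set.ncard_eq_one.mpr ⟨g w, ?_⟩⟩
  refine Set.Subset.antisymm ?_ (Set.singleton_subset_iff.mpr ⟨hg w hw, rfl⟩)
  rintro u ⟨hwu, hcolor⟩
  by_contra hne
  exact hφ (Or.inr ⟨hne, Or.inl ⟨w, hwu, rfl⟩⟩) hcolor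

theorem encard_earlier_witnessGraph_le [Preorder V] (hg : ∀ ⦃w u⦄, G.Adj w u → g w ≤ u) (v : V) :
    {u | u < v ∧ (witnessGraph G g).Adj v u}.encard ≤ 2 * (G.neighborSet v).encard := by
  have hsub : {u | u < v ∧ (witnessGraph G g).Adj v u} ⊆
      G.neighborSet v ∪ g '' G.neighborSet v := by
    rintro u ⟨huv, hadj | ⟨-, ⟨w, hwv, rfl⟩ | ⟨w, hwu, rfl⟩⟩⟩
    · exact Or.inl hadj
    · exact Or.inr ⟨w, hwv.symm, rfl⟩
    · exact absurd huv (hg hwu).not_gt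
  calc _ ≤ (G.neighborSet v ∪ g '' G.neighborSet v).encard := Set.encard_le_encard hsub
    _ ≤ (G.neighborSet v).encard + (g '' G.neighborSet v).encard := Set.encard_union_le _ _
    _ ≤ (G.neighborSet v).encard + (G.neighborSet v).encard :=
      add_le_add le_rfl (Set.encard_image_le _ _)
    _ = 2 * (G.neighborSet v).encard := (two_mul _).symm

end witnessGraph

theorem exists_isLeast_neighborSet [LinearOrder V] [WellFoundedLT V] (G : SimpleGraph V) :
    ∃ g : V → V, ∀ w, (G.neighborSet w).Nonempty → IsLeast (G.neighborSet w) (g w) := by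
  choose! g hg using fun w (hw : (G.neighborSet w).Nonempty) ↦
    wellFounded_lt.has_min (G.neighborSet w) hw
  exact ⟨g, fun w hw ↦ ⟨(hg w hw).1, fun u hu ↦ not_lt.mp ((hg w hw).2 u hu)⟩⟩

theorem exists_proper_conflictFree_of_encard_le {G : SimpleGraph V} {L : V → Finset ℕ} {S : Set V}
    (hS : ∀ v ∈ S, S.encard ≤ (L v).card)
    (hdeg : ∀ v ∉ S, 2 * (G.neighborSet v).encard < (L v).card) :
    ∃ φ : V → ℕ, (∀ v, φ v ∈ L v) ∧ Proper G φ ∧ ConflictFree G φ := by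
  obtain ⟨_, _, hlower⟩ := exists_wellOrder_isLowerSet S
  obtain ⟨g, hg⟩ := exists_isLeast_neighborSet G
  have hL (v : V) : {u | u < v ∧ (witnessGraph G g).Adj v u}.encard < (L v).card := by
    by_cases hv : v ∈ S
    · have hfin : S.Finite := Set.finite_of_encard_le_coe (hS v hv)
      have hssub : {u | u < v ∧ (witnessGraph G g).Adj v u} ⊂ S :=
        (Set.ssubset_iff_of_subset fun u hu ↦ hlower hu.1.le hv).mpr ⟨v, hv, fun h ↦ h.1.false⟩
      exact ((hfin.subset hssub.subset).encard_lt_encard hssub).trans_le (hS v hv)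
    · exact (encard_earlier_witnessGraph_le (fun w u hwu ↦ (hg w ⟨u, hwu⟩).2 hwu) v).trans_lt
        (hdeg v hv)
  obtain ⟨φ, hφL, hφ⟩ := exists_proper_of_encard_earlier_lt hL
  exact ⟨φ, hφL, hφ.mono le_sup_left, hφ.conflictFree_of_witnessGraph fun w hw ↦ (hg w hw).1⟩

theorem stmt13_general {G : SimpleGraph V} {k : ℝ} {S : Set V} (hS : S.Finite) (hSk : S.ncard ≤ k)
    (hdeg : ∀ v ∉ S, (G.neighborSet v).Finite ∧ 2 * ((G.neighborSet v).ncard : ℝ) < k) :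
    CFChoosable G k := by
  refine fun L hL ↦ exists_proper_conflictFree_of_encard_le (S := S) (fun v _ ↦ ?_) fun v hv ↦ ?_
  · rw [← hS.cast_ncard_eq]
    exact_mod_cast hSk.trans (hL v)
  · obtain ⟨hfin, hlt⟩ := hdeg v hv
    rw [← hfin.cast_ncard_eq]
    exact_mod_cast hlt.trans_le (hL v)

theorem stmt13 (d : ℝ) (hd : 1 ≤ d) (V : Type) [Fintype V] (G : SimpleGraph V)
    (h : ({v : V | d ≤ ((G.neighborSet v).ncard : ℝ)}.ncard : ℝ) ≤ d) :
    CFChoosable G (4 * d - 1) :=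
  stmt13_general (Set.toFinite _) (by linarith)
    fun v hv ↦ ⟨Set.toFinite _, by rw [Set.mem_ofPred_eq, not_le] at hv; linarith⟩

end CFPaper
end

section
/- Let n be a positive integer and G a finite simple graph on n vertices. Let v_1, v_2, …, v_n be an ordering of V(G) and, for every i ∈ [n], let S_i be a subset of V(G) such that N_G[v_i] ∩ {v_ℓ : ℓ ∈ [i]} ⊆ S_i ⊆ {v_ℓ : ℓ ∈ [i]}, where N_G[v] is the closed neighborhood of v. Let w_1 and w_2 be positive integers. If for every i ∈ [n] we have |S_i| ≤ w_1 and |(⋃_{j ∈ [n], v_i ∈ S_j} S_j) ∩ {v_ℓ : ℓ ∈ [i]}| ≤ w_2, then G is conflict-free (w_1+w_2−1)-choosable. -/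
open SimpleGraph

universe u v

namespace CFPaper

variable {V : Type u} {W : Type v}

/-!
Color the vertices greedily along the ordering. The color of `x` must differ from the colors of

* the vertices before `x` that share a set `S j` with `x`, of which there are at most `w₂ - 1`;
* the first neighbor of each earlier vertex in the set of `x`, of which there are at most `w₁ - 1`.

The lists are long enough for this, and adjacent vertices get distinct colors since they share a
set. The color of the first neighbor `m` of a vertex `z` is not repeated on another neighbor `y` of
`z`: if `y` precedes `z`, then `m` and `y` share the set of `z`, and if `y` follows `z`, then `z`
lies in the set of `y`, so that `y` avoided the color of `m`.
-/

theorem encard_setOf_exists_mem_isLeast_le {α β : Type*} [PartialOrder β] (f : α → Set β)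
    (T : Set α) : {y | ∃ z ∈ T, IsLeast (f z) y}.encard ≤ T.encard := by
  rcases T.eq_empty_or_nonempty with rfl | ⟨z₀, -⟩
  · simp
  have : Nonempty α := ⟨z₀⟩
  choose! z hzT hz using fun y (hy : y ∈ {y | ∃ z ∈ T, IsLeast (f z) y}) => hy
  exact Set.encard_le_encard_of_injOn hzT fun a ha b hb hab => (hz a ha).unique (hab ▸ hz b hb)

theorem exists_coloring_mem_of_encard_lt [LinearOrder V] [WellFoundedLT V] {C : Type*}
    (G : SimpleGraph V) (L : V → Set C)
    (hL : ∀ x, (G.neighborSet x ∩ Set.Iio x).encard < (L x).encard) :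
    ∃ φ : G.Coloring C, ∀ x, φ x ∈ L x := by
  have extend (x : V) (ψ : ∀ y < x, C) :
      ∃ c ∈ L x, ∀ y (hy : y < x), G.Adj x y → ψ y hy ≠ c := by
    let used : Set C := (fun y : ↥(G.neighborSet x ∩ Set.Iio x) => ψ y y.2.2) '' Set.univ
    have hused : used.encard < (L x).encard :=
      calc used.encard
        _ ≤ (Set.univ : Set ↥(G.neighborSet x ∩ Set.Iio x)).encard := Set.encard_image_le _ _
        _ = (G.neighborSet x ∩ Set.Iio x).encard := by rw [Set.encard_univ, ENat.card_coe_set_eq]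
        _ < (L x).encard := hL x
    obtain ⟨c, hcL, hc⟩ : ∃ c ∈ L x, c ∉ used :=
      Set.not_subset.1 fun h => (Set.encard_le_encard h).not_gt hused
    exact ⟨c, hcL, fun y hy hxy h => hc ⟨⟨y, hxy, hy⟩, trivial, h⟩⟩
  choose next next_mem next_ne using extend
  let φ : V → C := wellFounded_lt.fix next
  have φ_eq (x : V) : φ x = next x fun y _ => φ y := wellFounded_lt.fix_eq _ x
  have φ_ne {x y : V} (hy : y < x) (h : G.Adj x y) : φ y ≠ φ x := by
    rw [φ_eq x]
    exact next_ne x (fun y _ => φ y) y hy h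
  refine ⟨Coloring.mk φ fun {x y} h => ?_, fun x => (φ_eq x).symm ▸ next_mem x _⟩
  exact h.ne.lt_or_gt.elim (fun hxy => φ_ne hxy h.symm) fun hyx => (φ_ne hyx h).symm

theorem ConflictFree.comp_iso {G : SimpleGraph V} {H : SimpleGraph W} {φ : W → ℕ}
    (h : ConflictFree H φ) (e : G ≃g H) : ConflictFree G (φ ∘ e) := by
  rintro x ⟨y, hxy⟩
  obtain ⟨c, hc⟩ := h (e x) ⟨e y, e.map_adj_iff.2 hxy⟩
  refine ⟨c, ?_⟩
  rw [← hc, ← Set.ncard_preimage_of_injective_subset_range e.injective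
    (e.surjective.range_eq ▸ Set.subset_univ _)]
  simp only [Set.preimage_ofPred_eq, e.map_adj_iff, Function.comp_apply]

theorem CFChoosable.of_iso {G : SimpleGraph V} {H : SimpleGraph W} {k : ℝ}
    (h : CFChoosable H k) (e : G ≃g H) : CFChoosable G k := by
  intro L hL
  obtain ⟨φ, hφL, hφ, hφcf⟩ := h (L ∘ e.symm) fun x => hL (e.symm x)
  refine ⟨φ ∘ e, fun x => ?_, fun x y hxy => hφ (e.map_adj_iff.2 hxy), hφcf.comp_iso e⟩
  simpa only [Function.comp_apply, e.symm_apply_apply] using hφL (e x)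

section WellOrderedVertices

variable [LinearOrder V] {G : SimpleGraph V} {S : V → Set V}

/-- The graph joining two vertices `x < y` if they share a member of the family `S`, or if `x` is
the first `G`-neighbor of a vertex `z ∈ S y` preceding `y`. These are the pairs that a greedy
coloring has to tell apart in order to be proper and conflict-free for `G`. -/
def conflictGraph (G : SimpleGraph V) (S : V → Set V) : SimpleGraph V :=
  SimpleGraph.fromRel fun x y =>
    x < y ∧ ((∃ z, x ∈ S z ∧ y ∈ S z) ∨ ∃ z ∈ S y, z < y ∧ IsLeast (G.neighborSet z) x)

theorem conflictGraph_adj_of_lt {x y : V} (hxy : x < y) :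
    (conflictGraph G S).Adj x y ↔
      (∃ z, x ∈ S z ∧ y ∈ S z) ∨ ∃ z ∈ S y, z < y ∧ IsLeast (G.neighborSet z) x := by
  simp only [conflictGraph, fromRel_adj, hxy.ne, hxy, hxy.not_gt, ne_eq, not_false_eq_true,
    true_and, false_and, or_false]

theorem le_conflictGraph (hS : ∀ x, insert x (G.neighborSet x) ∩ Set.Iic x ⊆ S x) :
    G ≤ conflictGraph G S := by
  have adj_of_lt {x y : V} (h : G.Adj x y) (hxy : x < y) : (conflictGraph G S).Adj x y :=
    (conflictGraph_adj_of_lt hxy).2 <| .inl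
      ⟨y, hS y ⟨.inr h.symm, hxy.le⟩, hS y ⟨.inl rfl, le_rfl⟩⟩
  intro x y h
  exact h.ne.lt_or_gt.elim (adj_of_lt h) fun hyx => (adj_of_lt h.symm hyx).symm

theorem conflictGraph_adj_of_isLeast
    (hS : ∀ x, insert x (G.neighborSet x) ∩ Set.Iic x ⊆ S x) {x y m : V}
    (hm : IsLeast (G.neighborSet x) m) (hxy : G.Adj x y) (hne : y ≠ m) :
    (conflictGraph G S).Adj m y := by
  have hmy : m < y := lt_of_le_of_ne (hm.2 hxy) hne.symm
  rw [conflictGraph_adj_of_lt hmy]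
  rcases hxy.ne.lt_or_gt with hlt | hgt
  · exact .inr ⟨x, hS y ⟨.inr hxy.symm, hlt.le⟩, hlt, hm⟩
  · exact .inl ⟨x, hS x ⟨.inr hm.1, (hmy.trans hgt).le⟩, hS x ⟨.inr hxy, hgt.le⟩⟩

theorem conflictFree_of_coloring_conflictGraph [WellFoundedLT V]
    (hS : ∀ x, insert x (G.neighborSet x) ∩ Set.Iic x ⊆ S x)
    (φ : (conflictGraph G S).Coloring ℕ) : ConflictFree G φ := by
  intro x hx
  obtain ⟨m, hm⟩ : ∃ m, IsLeast (G.neighborSet x) m :=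
    ⟨_, wellFounded_lt.min_mem _ hx, fun y hy => wellFounded_lt.min_le hy⟩
  refine ⟨φ m, Set.ncard_eq_one.2 ⟨m, Set.eq_singleton_iff_unique_mem.2 ⟨⟨hm.1, rfl⟩, ?_⟩⟩⟩
  rintro y ⟨hxy, hφ⟩
  by_contra hne
  exact φ.valid (conflictGraph_adj_of_isLeast hS hm hxy hne) hφ.symm

theorem encard_conflictGraph_neighborSet_inter_Iio_lt {w₁ w₂ : ℕ} {x : V} (hx : x ∈ S x)
    (hw₁ : (S x).encard ≤ w₁)
    (hw₂ : ((⋃ y ∈ {y | x ∈ S y}, S y) ∩ Set.Iic x).encard ≤ w₂) :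
    ((conflictGraph G S).neighborSet x ∩ Set.Iio x).encard < (w₁ + w₂ - 1 : ℕ) := by
  let shared : Set V := ((⋃ y ∈ {y | x ∈ S y}, S y) ∩ Set.Iic x) \ {x}
  let least : Set V := {y | ∃ z ∈ S x \ {x}, IsLeast (G.neighborSet z) y}
  have hsub : (conflictGraph G S).neighborSet x ∩ Set.Iio x ⊆ shared ∪ least := by
    rintro y ⟨hxy, hyx : y < x⟩
    rcases (conflictGraph_adj_of_lt hyx).1 hxy.symm with ⟨z, hyz, hxz⟩ | ⟨z, hzx, hlt, hz⟩
    · exact .inl ⟨⟨Set.mem_biUnion hxz hyz, hyx.le⟩, hyx.ne⟩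
    · exact .inr ⟨z, ⟨hzx, hlt.ne⟩, hz⟩
  have hshared : shared.encard + 1 ≤ w₂ :=
    have hmem : x ∈ (⋃ y ∈ {y | x ∈ S y}, S y) ∩ Set.Iic x := ⟨Set.mem_biUnion hx hx, le_rfl⟩
    (Set.encard_sdiff_singleton_add_one hmem).trans_le hw₂
  have hleast : least.encard + 1 ≤ w₁ :=
    calc least.encard + 1
        ≤ (S x \ {x}).encard + 1 := by
          gcongr ?_ + 1; exact encard_setOf_exists_mem_isLeast_le G.neighborSet _
      _ = (S x).encard := Set.encard_sdiff_singleton_add_one hx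
      _ ≤ w₁ := hw₁
  refine ((Set.encard_le_encard hsub).trans (Set.encard_union_le _ _)).trans_lt ?_
  generalize shared.encard = a at *
  generalize least.encard = b at *
  enat_to_nat
  omega

theorem cfChoosable_of_wellFoundedLT [WellFoundedLT V]
    (hS : ∀ x, insert x (G.neighborSet x) ∩ Set.Iic x ⊆ S x) {w₁ w₂ : ℕ}
    (hw₁ : ∀ x, (S x).encard ≤ w₁)
    (hw₂ : ∀ x, ((⋃ y ∈ {y | x ∈ S y}, S y) ∩ Set.Iic x).encard ≤ w₂) :
    CFChoosable G ((w₁ + w₂ - 1 : ℕ) : ℝ) := by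
  intro L hL
  obtain ⟨φ, hφL⟩ := exists_coloring_mem_of_encard_lt (conflictGraph G S) (fun x => (L x : Set ℕ))
    fun x => calc
      ((conflictGraph G S).neighborSet x ∩ Set.Iio x).encard
      _ < ((w₁ + w₂ - 1 : ℕ) : ℕ∞) :=
        encard_conflictGraph_neighborSet_inter_Iio_lt (hS x ⟨.inl rfl, le_rfl⟩) (hw₁ x) (hw₂ x)
      _ ≤ (L x : Set ℕ).encard := by
        rw [Set.encard_coe_eq_coe_finsetCard]
        exact_mod_cast hL x
  exact ⟨φ, hφL, fun _ _ h => φ.valid (le_conflictGraph hS h),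
    conflictFree_of_coloring_conflictGraph hS φ⟩

end WellOrderedVertices

theorem stmt15_general {ι : Type*} [LinearOrder ι] [WellFoundedLT ι] (G : SimpleGraph V)
    (v : ι → V) (hv : Function.Bijective v) (S : ι → Set V)
    (hS : ∀ i, insert (v i) (G.neighborSet (v i)) ∩ v '' Set.Iic i ⊆ S i) (w₁ w₂ : ℕ)
    (hw₁ : ∀ i, (S i).encard ≤ w₁)
    (hw₂ : ∀ i, ((⋃ j ∈ {j | v i ∈ S j}, S j) ∩ v '' Set.Iic i).encard ≤ w₂) :
    CFChoosable G ((w₁ + w₂ - 1 : ℕ) : ℝ) := by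
  let e : ι ≃ V := Equiv.ofBijective v hv
  have encard_preimage (T : Set V) : (v ⁻¹' T).encard = T.encard :=
    Set.encard_preimage_of_bijective hv T
  refine (cfChoosable_of_wellFoundedLT (G := G.comap e) (S := fun i => v ⁻¹' S i) ?_ ?_ ?_).of_iso
    (Iso.comap e G).symm
  · rintro i j ⟨hj, hji⟩
    exact hS i ⟨hj.imp (congrArg v) id, j, hji, rfl⟩
  · exact fun i => (encard_preimage _).trans_le (hw₁ i)
  · intro i
    refine le_of_eq_of_le ?_ (hw₂ i)
    rw [← encard_preimage, Set.preimage_inter, Set.preimage_iUnion₂,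
      hv.injective.preimage_image]
    rfl

theorem stmt15 (n : ℕ) (hn : 0 < n) (V : Type) [Fintype V] (G : SimpleGraph V)
    (hcard : Fintype.card V = n)
    (v : Fin n → V) (hv : Function.Bijective v)
    (Sv : Fin n → Set V)
    (hS1 : ∀ i : Fin n,
      (insert (v i) (G.neighborSet (v i))) ∩ {u : V | ∃ ℓ ≤ i, v ℓ = u} ⊆ Sv i)
    (hS2 : ∀ i : Fin n, Sv i ⊆ {u : V | ∃ ℓ ≤ i, v ℓ = u})
    (w₁ w₂ : ℕ) (hw₁ : 0 < w₁) (hw₂ : 0 < w₂)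
    (hB1 : ∀ i : Fin n, (Sv i).ncard ≤ w₁)
    (hB2 : ∀ i : Fin n,
      ((⋃ j ∈ {j : Fin n | v i ∈ Sv j}, Sv j) ∩ {u : V | ∃ ℓ ≤ i, v ℓ = u}).ncard ≤ w₂) :
    CFChoosable G ((w₁ + w₂ - 1 : ℕ) : ℝ) := by
  have encard_le {T : Set V} {w : ℕ} (h : T.ncard ≤ w) : T.encard ≤ w :=
    T.toFinite.cast_ncard_eq ▸ Nat.cast_le.2 h
  exact stmt15_general G v hv Sv hS1 w₁ w₂ (fun i => encard_le (hB1 i)) fun i => encard_le (hB2 i)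

end CFPaper
end

section
/- Let w and d be nonnegative integers, let H be a finite simple graph with treewidth at most w, and let Q be a finite simple graph with maximum degree at most d. Then the strong product H ⊠ Q is conflict-free ((w+1)(d²+d+2)−1)-choosable. -/
open SimpleGraph

universe u v

namespace CFPaper

variable {V : Type u} {W : Type v}

/-!
Order the vertices of `H` by the height of the topmost bag containing them. Since two subtrees
of a rooted tree that meet contain the lower of their two tops, the earlier vertices sharing a bag
with `x` all lie in the topmost bag of `x`: there are at most `w` of them and they share a bag.

Color `H ⊠ Q` greedily in the lexicographic order, properly for a larger graph chosen so that one
neighbor of each vertex `(x, p)` differs from all the others. If `p` has a neighbor `s`, it is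
enough that vertices sharing a bag in `H`, or equal in `H`, get distinct colors at distance at most
two in `Q`: the color of `(x, s)` then appears only once around `(x, p)`. If `p` is isolated, then
the unique color is that of `(u, p)` for the first neighbor `u` of `x`; each later neighbor `y` of
`x` must avoid this color. Either `x < y`, and this is one more constraint on `y` for each of its
at most `w` earlier neighbors, or `y < x`, and `u` and `y` share a bag already.

In total a vertex has at most `w (d² + 1) + d² + w = (w + 1) (d² + 2) - 2` earlier constraints.
-/

section GreedyColoring

/-- The neighbors of `v` in `G` that precede `v` in the ordering `r`: the vertices that constrain
`v` when `G` is colored greedily along `r`. -/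
def backNeighbors (r : V → V → Prop) (G : SimpleGraph V) (v : V) : Set V :=
  {u | G.Adj v u ∧ r u v}

/-- `K` isolates neighbors of `G` if every non-isolated vertex of `G` has a neighbor joined in `K`
to all its other neighbors. A proper coloring of `K` then gives that neighbor a color appearing
only once. -/
def IsolatesNeighbors (K G : SimpleGraph V) : Prop :=
  ∀ v, (G.neighborSet v).Nonempty →
    ∃ u ∈ G.neighborSet v, ∀ u' ∈ G.neighborSet v, u' ≠ u → K.Adj u' u

theorem IsolatesNeighbors.conflictFree {G K : SimpleGraph V} (hK : IsolatesNeighbors K G)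
    {φ : V → ℕ} (hφ : Proper K φ) : ConflictFree G φ := by
  intro v hv
  obtain ⟨u, hu, hu'⟩ := hK v hv
  refine ⟨φ u, Set.ncard_eq_one.mpr ⟨u, Set.eq_singleton_iff_unique_mem.mpr ⟨⟨hu, rfl⟩, ?_⟩⟩⟩
  rintro u' ⟨hadj, hcolor⟩
  by_contra hne
  exact hφ (hu' u' hadj hne) hcolor

theorem exists_proper_listColoring (r : V → V → Prop) [IsWellOrder V r] {G : SimpleGraph V}
    {L : V → Finset ℕ} (hL : ∀ v, (backNeighbors r G v).encard < (L v).card) :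
    ∃ φ : V → ℕ, (∀ v, φ v ∈ L v) ∧ Proper G φ := by
  have avoid : ∀ v (s : Set ℕ), ∃ c, s.encard < (L v).card → c ∈ L v ∧ c ∉ s := by
    intro v s
    by_cases hs : s.encard < (L v).card
    · rw [← Set.encard_coe_eq_coe_finsetCard] at hs
      obtain ⟨c, hc⟩ := Set.not_subset.mp fun hsub => hs.not_ge (Set.encard_le_encard hsub)
      exact ⟨c, fun _ => hc⟩
    · exact ⟨0, fun h => absurd h hs⟩
  choose pick hpick using avoid
  have hwf : WellFounded r := IsWellFounded.wf
  let φ : V → ℕ := hwf.fix fun v color => pick v {c | ∃ u, ∃ h : r u v, G.Adj v u ∧ color u h = c}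
  have hφ : ∀ v, φ v = pick v (φ '' backNeighbors r G v) := by
    intro v
    refine (hwf.fix_eq _ v).trans (congrArg (pick v) ?_)
    ext c
    exact exists_congr fun u =>
      ⟨fun ⟨hr, hadj, hc⟩ => ⟨⟨hadj, hr⟩, hc⟩, fun ⟨⟨hadj, hr⟩, hc⟩ => ⟨hr, hadj, hc⟩⟩
  have hgreedy : ∀ v, φ v ∈ L v ∧ φ v ∉ φ '' backNeighbors r G v := by
    intro v
    have := hpick v _ ((Set.encard_image_le φ _).trans_lt (hL v))
    rwa [← hφ v] at this
  refine ⟨φ, fun v => (hgreedy v).1, fun u v hadj heq => ?_⟩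
  rcases trichotomous_of r u v with h | h | h
  · exact (hgreedy v).2 ⟨u, ⟨hadj.symm, h⟩, heq⟩
  · exact hadj.ne h
  · exact (hgreedy u).2 ⟨v, ⟨hadj, h⟩, heq.symm⟩

theorem IsolatesNeighbors.cfChoosable (r : V → V → Prop) [IsWellOrder V r] {G K : SimpleGraph V}
    (hK : IsolatesNeighbors K G) (hGK : G ≤ K) {k : ℕ}
    (hback : ∀ v, (backNeighbors r K v).encard < k) : CFChoosable G k := by
  intro L hL
  have hlist : ∀ v, (backNeighbors r K v).encard < (L v).card := fun v =>
    (hback v).trans_le (by exact_mod_cast hL v)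
  obtain ⟨φ, hφL, hφ⟩ := exists_proper_listColoring r hlist
  exact ⟨φ, hφL, fun _ _ hadj => hφ (hGK hadj), hK.conflictFree hφ⟩

theorem CFChoosable.mono {G : SimpleGraph V} {k l : ℝ} (hG : CFChoosable G k) (hkl : k ≤ l) :
    CFChoosable G l :=
  fun L hL => hG L fun v => hkl.trans (hL v)

end GreedyColoring

section FirstNeighbors

variable {α : Type*} [LinearOrder α] {H F : SimpleGraph α}

/-- The graph joining `x` to the first neighbor in `H` of every `z < x` adjacent to `x`. -/
def firstNeighborGraph (H : SimpleGraph α) : SimpleGraph α :=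
  fromRel fun x u => ∃ z < x, H.Adj z x ∧ IsLeast (H.neighborSet z) u

theorem encard_backNeighbors_firstNeighborGraph_le (x : α) :
    (backNeighbors (· < ·) (firstNeighborGraph H) x).encard ≤
      (backNeighbors (· < ·) H x).encard := by
  have hvia : ∀ u ∈ backNeighbors (· < ·) (firstNeighborGraph H) x,
      ∃ z ∈ backNeighbors (· < ·) H x, IsLeast (H.neighborSet z) u := by
    rintro u ⟨hadj, hux⟩
    rcases ((fromRel_adj _ _ _).mp hadj).2 with
      ⟨z, hzx, hzadj, hleast⟩ | ⟨z, -, hzadj, hleast⟩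
    · exact ⟨z, ⟨hzadj.symm, hzx⟩, hleast⟩
    · exact absurd (hleast.2 hzadj) hux.not_ge
  choose! via hback hleast using hvia
  refine Set.encard_le_encard_of_injOn hback fun u hu u' hu' heq => ?_
  exact (hleast u hu).unique (heq ▸ hleast u' hu')

theorem isolatesNeighbors_sup_firstNeighborGraph [WellFoundedLT α] (hHF : H ≤ F)
    (hclique : ∀ x, F.IsClique (backNeighbors (· < ·) F x)) :
    IsolatesNeighbors (F ⊔ firstNeighborGraph H) H := by
  intro z hz
  obtain ⟨u, hu⟩ : ∃ u, IsLeast (H.neighborSet z) u :=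
    ⟨wellFounded_lt.min _ hz, wellFounded_lt.min_mem _ hz, fun y hy => wellFounded_lt.min_le hy⟩
  refine ⟨u, hu.1, fun y hy hyu => ?_⟩
  have huy : u < y := (hu.2 hy).lt_of_ne hyu.symm
  rcases lt_or_gt_of_ne (H.ne_of_adj hy) with hzy | hyz
  · exact Or.inr ((fromRel_adj _ _ _).mpr ⟨hyu, Or.inl ⟨z, hzy, hy, hu⟩⟩)
  · exact Or.inl (hclique z ⟨hHF hy, hyz⟩ ⟨hHF hu.1, huy.trans hyz⟩ hyu)

end FirstNeighbors

section Square

variable {β : Type*} {Q : SimpleGraph β}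

/-- The square of `Q`: its edges join the distinct vertices at distance at most two in `Q`. -/
def square (Q : SimpleGraph β) : SimpleGraph β :=
  fromRel fun p q => Q.Adj p q ∨ ∃ s, Q.Adj p s ∧ Q.Adj s q

theorem square_adj {p q : β} :
    (square Q).Adj p q ↔ p ≠ q ∧ (Q.Adj p q ∨ ∃ s, Q.Adj p s ∧ Q.Adj s q) := by
  simp only [square, fromRel_adj, Q.adj_comm q p, Q.adj_comm q, Q.adj_comm _ p,
    and_comm (a := Q.Adj _ q), or_self]

theorem le_square : Q ≤ square Q :=
  fun _ _ hadj => square_adj.mpr ⟨hadj.ne, Or.inl hadj⟩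

theorem encard_biUnion_le_mul {ι γ : Type*} {t : Set ι} {s : ι → Set γ} {m n : ℕ}
    (ht : t.encard ≤ m) (hs : ∀ i ∈ t, (s i).encard ≤ n) : (⋃ i ∈ t, s i).encard ≤ m * n := by
  lift t to Finset ι using Set.finite_of_encard_le_coe ht
  rw [Set.encard_coe_eq_coe_finsetCard] at ht
  calc (⋃ i ∈ t, s i).encard ≤ ∑ i ∈ t, (s i).encard := t.set_encard_biUnion_le s
    _ ≤ t.card • (n : ℕ∞) := Finset.sum_le_card_nsmul _ _ _ hs
    _ ≤ m * n := by rw [nsmul_eq_mul]; gcongr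

theorem encard_neighborSet_square_le {d : ℕ} (hdeg : ∀ p, (Q.neighborSet p).encard ≤ d) (p : β) :
    ((square Q).neighborSet p).encard ≤ (d ^ 2 : ℕ) := by
  have hcover : (square Q).neighborSet p ⊆
      ⋃ s ∈ Q.neighborSet p, insert s (Q.neighborSet s \ {p}) := by
    intro q hq
    simp only [Set.mem_iUnion]
    obtain ⟨hne, hadj | ⟨s, hps, hsq⟩⟩ := square_adj.mp hq
    · exact ⟨q, hadj, Set.mem_insert q _⟩
    · exact ⟨s, hps, Or.inr ⟨hsq, hne.symm⟩⟩
  have hpart : ∀ s ∈ Q.neighborSet p, (insert s (Q.neighborSet s \ {p})).encard ≤ d := by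
    intro s hs
    calc (insert s (Q.neighborSet s \ {p})).encard
        ≤ (Q.neighborSet s \ {p}).encard + 1 := Set.encard_insert_le _ _
      _ = (Q.neighborSet s).encard := Set.encard_sdiff_singleton_add_one hs.symm
      _ ≤ d := hdeg s
  rw [sq, Nat.cast_mul]
  exact (Set.encard_le_encard hcover).trans (encard_biUnion_le_mul (hdeg p) hpart)

end Square

section StrongProduct

variable {α β : Type*} {H F J : SimpleGraph α} {Q R : SimpleGraph β}

theorem strongProd_adj {a b : α × β} : (strongProd H Q).Adj a b ↔
    a ≠ b ∧ (a.1 = b.1 ∨ H.Adj a.1 b.1) ∧ (a.2 = b.2 ∨ Q.Adj a.2 b.2) := by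
  simp only [strongProd, fromRel_adj, H.adj_comm b.1, Q.adj_comm b.2,
    eq_comm (a := b.1), eq_comm (a := b.2), ne_eq, Prod.ext_iff]
  tauto

theorem strongProd_mono (hHF : H ≤ F) (hQR : Q ≤ R) : strongProd H Q ≤ strongProd F R := by
  intro a b hadj
  rw [strongProd_adj] at hadj ⊢
  exact ⟨hadj.1, hadj.2.1.imp_right (@hHF _ _), hadj.2.2.imp_right (@hQR _ _)⟩

theorem isolatesNeighbors_strongProd (hHF : H ≤ F) (hJ : IsolatesNeighbors (F ⊔ J) H) :
    IsolatesNeighbors (strongProd F (square Q) ⊔ J □ ⊥) (strongProd H Q) := by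
  rintro ⟨x, p⟩ ⟨⟨x₀, p₀⟩, h₀⟩
  by_cases hp : ∃ s, Q.Adj p s
  · obtain ⟨s, hs⟩ := hp
    refine ⟨(x, s), strongProd_adj.mpr ⟨?_, Or.inl rfl, Or.inr hs⟩, ?_⟩
    · simpa using hs.ne
    rintro ⟨y, q⟩ hadj hne
    obtain ⟨-, hxy, hpq⟩ := strongProd_adj.mp hadj
    refine Or.inl (strongProd_adj.mpr ⟨hne, hxy.imp Eq.symm fun h => (hHF h).symm, ?_⟩)
    refine or_iff_not_imp_left.mpr fun hqs => square_adj.mpr ⟨hqs, ?_⟩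
    exact hpq.imp (fun h => by rwa [← h]) fun h => ⟨p, h.symm, hs⟩
  · have hfiber : ∀ {y q}, (strongProd H Q).Adj (x, p) (y, q) → p = q ∧ H.Adj x y := by
      intro y q hadj
      obtain ⟨hne, hxy, hpq⟩ := strongProd_adj.mp hadj
      have hpq : p = q := hpq.resolve_right fun h => hp ⟨q, h⟩
      exact ⟨hpq, hxy.resolve_left fun h => hne (Prod.ext h hpq)⟩
    obtain ⟨u, hu, hu'⟩ := hJ x ⟨x₀, (hfiber h₀).2⟩
    refine ⟨(u, p), strongProd_adj.mpr ⟨?_, Or.inr hu, Or.inl rfl⟩, ?_⟩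
    · simpa using H.ne_of_adj hu
    rintro ⟨y, q⟩ hadj hne
    obtain ⟨rfl, hxy⟩ := hfiber hadj
    rcases hu' y hxy fun h => hne (by rw [h]) with hyu | hyu
    · exact Or.inl (strongProd_adj.mpr ⟨hne, Or.inr hyu, Or.inl rfl⟩)
    · exact Or.inr (boxProd_adj_left.mpr hyu)

variable [LinearOrder α] {s : β → β → Prop}

theorem backNeighbors_strongProd_sup_boxProd_subset (a : α × β) :
    backNeighbors (Prod.Lex (· < ·) s) (strongProd F R ⊔ J □ ⊥) a ⊆
      backNeighbors (· < ·) F a.1 ×ˢ insert a.2 (R.neighborSet a.2) ∪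
        {a.1} ×ˢ R.neighborSet a.2 ∪ backNeighbors (· < ·) J a.1 ×ˢ {a.2} := by
  rintro b ⟨hstrong | hbox, hlex⟩
  · obtain ⟨hne, hfst, hsnd⟩ := strongProd_adj.mp hstrong
    rcases Prod.lex_def.mp hlex with hlt | ⟨heq, -⟩
    · exact Or.inl (Or.inl ⟨⟨hfst.resolve_left hlt.ne', hlt⟩, hsnd.imp_left Eq.symm⟩)
    · exact Or.inl (Or.inr ⟨heq, hsnd.resolve_left fun h => hne (Prod.ext heq.symm h)⟩)
  · obtain ⟨hJ, heq⟩ : J.Adj a.1 b.1 ∧ a.2 = b.2 := by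
      simpa only [boxProd_adj, bot_adj, false_and, or_false] using hbox
    rcases Prod.lex_def.mp hlex with hlt | ⟨h, -⟩
    · exact Or.inr ⟨⟨hJ, hlt⟩, heq.symm⟩
    · exact absurd h hJ.ne'

theorem encard_backNeighbors_strongProd_sup_boxProd_le {w n D : ℕ}
    (hF : ∀ x, (backNeighbors (· < ·) F x).encard ≤ w)
    (hJ : ∀ x, (backNeighbors (· < ·) J x).encard ≤ n)
    (hR : ∀ p, (R.neighborSet p).encard ≤ D) (a : α × β) :
    (backNeighbors (Prod.Lex (· < ·) s) (strongProd F R ⊔ J □ ⊥) a).encard ≤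
      (w * (D + 1) + D + n : ℕ) := by
  push_cast
  refine (Set.encard_le_encard (backNeighbors_strongProd_sup_boxProd_subset a)).trans ?_
  refine (Set.encard_union_le _ _).trans (add_le_add ((Set.encard_union_le _ _).trans ?_) ?_)
  · rw [Set.encard_prod, Set.encard_prod, Set.encard_singleton, one_mul]
    gcongr
    · exact hF a.1
    · exact (Set.encard_insert_le _ _).trans (add_le_add_left (hR a.2) 1)
    · exact hR a.2
  · rw [Set.encard_prod, Set.encard_singleton, mul_one]
    exact hJ a.1

theorem cfChoosable_strongProd [WellFoundedLT α] {w D : ℕ} (hHF : H ≤ F)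
    (hclique : ∀ x, F.IsClique (backNeighbors (· < ·) F x))
    (hw : ∀ x, (backNeighbors (· < ·) F x).encard ≤ w)
    (hD : ∀ p, ((square Q).neighborSet p).encard ≤ D) :
    CFChoosable (strongProd H Q) ((w + 1) * (D + 2) - 1 : ℕ) := by
  have hisolates := isolatesNeighbors_strongProd (Q := Q) hHF
    (isolatesNeighbors_sup_firstNeighborGraph hHF hclique)
  have hfirst : ∀ x, (backNeighbors (· < ·) (firstNeighborGraph H) x).encard ≤ w := fun x =>
    calc (backNeighbors (· < ·) (firstNeighborGraph H) x).encard
        ≤ (backNeighbors (· < ·) H x).encard := encard_backNeighbors_firstNeighborGraph_le x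
      _ ≤ (backNeighbors (· < ·) F x).encard :=
        Set.encard_le_encard fun _ hu => ⟨hHF hu.1, hu.2⟩
      _ ≤ w := hw x
  refine hisolates.cfChoosable (Prod.Lex (· < ·) WellOrderingRel)
    ((strongProd_mono hHF le_square).trans le_sup_left) fun a =>
      (encard_backNeighbors_strongProd_sup_boxProd_le hw hfirst hD a).trans_lt ?_
  have : (w + 1) * (D + 2) = w * (D + 1) + D + w + 2 := by ring
  exact_mod_cast (by omega : w * (D + 1) + D + w < (w + 1) * (D + 2) - 1)

end StrongProduct

section TreeDecomposition

variable {ι α : Type*} {T : SimpleGraph ι} {S S' : Set ι} {t m m' y z : ι}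

theorem dist_lt_dist_of_mem_support {q : T.Walk m t} (hq : q.length = T.dist m t)
    (hz : z ∈ q.support) (hne : z ≠ m) : T.dist z t < T.dist m t := by
  classical
  exact hq ▸ (T.dist_le (q.dropUntil z hz)).trans_lt (Walk.length_dropUntil_lt_length hz hne)

theorem exists_isPath_append_of_isMinOn_dist (hT : T.Connected) (hS : (T.induce S).Connected)
    (hy : y ∈ S) (hm : m ∈ S) (hmin : IsMinOn (T.dist · t) S m) :
    ∃ (p : T.Walk y m) (q : T.Walk m t), (p.append q).IsPath ∧ q.length = T.dist m t ∧
      ∀ z ∈ p.support, z ∈ S := by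
  obtain ⟨p₀, hp₀⟩ := hS.preconnected.exists_isPath ⟨y, hy⟩ ⟨m, hm⟩
  let p : T.Walk y m := p₀.map (Embedding.induce S).toHom
  have hp : p.IsPath := Walk.IsPath.map (Embedding.induce (G := T) S).injective hp₀
  have hpS : ∀ z ∈ p.support, z ∈ S := by
    intro z hz
    obtain ⟨a, -, rfl⟩ := List.mem_map.mp (p₀.support_map _ ▸ hz)
    exact a.2
  obtain ⟨q, hq, hqdist⟩ := hT.exists_path_of_dist m t
  refine ⟨p, q, ?_, hqdist, hpS⟩
  have hqnodup := hq.support_nodup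
  rw [← Walk.cons_tail_support, List.nodup_cons] at hqnodup
  rw [Walk.isPath_def, Walk.support_append]
  refine hp.support_nodup.append hqnodup.2 fun z hzp hzq => ?_
  have hzm : z ≠ m := fun h => hqnodup.1 (h ▸ hzq)
  exact (hmin (hpS z hzp)).not_gt
    (dist_lt_dist_of_mem_support hqdist (List.mem_of_mem_tail hzq) hzm)

-- The paths from `y` to `t` through `m` and through `m'` coincide, and `m` comes no later than `m'`
-- on this path, hence lies on its part inside `S'`.
theorem mem_of_isMinOn_dist (hT : T.IsTree) (hS : (T.induce S).Connected)
    (hS' : (T.induce S').Connected) (hy : y ∈ S) (hy' : y ∈ S')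
    (hm : m ∈ S) (hmin : IsMinOn (T.dist · t) S m)
    (hm' : m' ∈ S') (hmin' : IsMinOn (T.dist · t) S' m')
    (hle : T.dist m' t ≤ T.dist m t) : m ∈ S' := by
  obtain ⟨p, q, hpath, -, -⟩ := exists_isPath_append_of_isMinOn_dist hT.connected hS hy hm hmin
  obtain ⟨p', q', hpath', hdist', hp'S'⟩ :=
    exists_isPath_append_of_isMinOn_dist hT.connected hS' hy' hm' hmin'
  have heq : p.append q = p'.append q' := (hT.existsUnique_path y t).unique hpath hpath'
  have hmem : m ∈ (p'.append q').support := heq ▸ by simp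
  rcases (Walk.mem_support_append_iff _ _).mp hmem with hmp | hmq
  · exact hp'S' m hmp
  · by_cases hmm : m = m'
    · exact hmm ▸ hm'
    · exact absurd (dist_lt_dist_of_mem_support hdist' hmq hmm) hle.not_gt

/-- The graph joining any two distinct vertices that share a bag of `B`. For a tree-decomposition
this is a chordal completion of the decomposed graph. -/
def bagGraph (B : ι → Set α) : SimpleGraph α :=
  fromRel fun a b => ∃ i, a ∈ B i ∧ b ∈ B i

theorem bagGraph_adj {B : ι → Set α} {a b : α} :
    (bagGraph B).Adj a b ↔ a ≠ b ∧ ∃ i, a ∈ B i ∧ b ∈ B i := by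
  simp only [bagGraph, fromRel_adj, and_comm (a := b ∈ _), or_self]

theorem isClique_bagGraph (B : ι → Set α) (i : ι) : (bagGraph B).IsClique (B i) :=
  fun _ ha _ hb hne => bagGraph_adj.mpr ⟨hne, i, ha, hb⟩

theorem IsTreeDecomp.le_bagGraph {H : SimpleGraph α} {B : ι → Set α} (hB : IsTreeDecomp H T B) :
    H ≤ bagGraph B :=
  fun _ _ hadj => bagGraph_adj.mpr ⟨hadj.ne, hB.edge_in_bag hadj⟩

theorem exists_linearOrder_monotone {γ : Type*} [LinearOrder γ] [WellFoundedLT γ] (f : α → γ) :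
    ∃ _ : LinearOrder α, WellFoundedLT α ∧ Monotone f := by
  obtain ⟨_, _⟩ := exists_wellFoundedLT (α := α)
  let g : α → γ ×ₗ α := fun a => toLex (f a, a)
  have hg : Function.Injective g := fun _ _ h => congrArg (fun b => (ofLex b).2) h
  exact ⟨LinearOrder.lift' g hg, ⟨InvImage.wf g wellFounded_lt⟩,
    fun _ _ hab => Prod.Lex.monotone_fst _ _ hab⟩

theorem IsTreeDecomp.exists_linearOrder_backNeighbors_subset {H : SimpleGraph α} {B : ι → Set α}
    (hB : IsTreeDecomp H T B) :
    ∃ _ : LinearOrder α, WellFoundedLT α ∧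
      ∀ x, ∃ i, insert x (backNeighbors (· < ·) (bagGraph B) x) ⊆ B i := by
  obtain ⟨t⟩ := hB.tree.connected.nonempty
  have htop : ∀ x, ∃ m ∈ {i | x ∈ B i}, IsMinOn (T.dist · t) {i | x ∈ B i} m := fun x =>
    have hbags : {i | x ∈ B i}.Nonempty := Set.nonempty_coe_sort.mp (hB.bags_connected x).nonempty
    ⟨Function.argminOn (T.dist · t) _ hbags, Function.argminOn_mem _ _ hbags,
      fun _ hi => Function.argminOn_le (T.dist · t) _ hi⟩
  choose top hmem hmin using htop
  obtain ⟨hord, hwf, hmono⟩ := exists_linearOrder_monotone fun x => T.dist (top x) t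
  refine ⟨hord, hwf, fun x => ⟨top x, Set.insert_subset (hmem x) ?_⟩⟩
  rintro u ⟨hadj, hux⟩
  obtain ⟨-, y, hxy, huy⟩ := bagGraph_adj.mp hadj
  exact mem_of_isMinOn_dist (S' := {i | u ∈ B i}) hB.tree (hB.bags_connected x)
    (hB.bags_connected u) hxy huy (hmem x) (hmin x) (hmem u) (hmin u) (hmono hux.le)

end TreeDecomposition

theorem stmt16_general {ι α β : Type*} {w d : ℕ} {H : SimpleGraph α} {Q : SimpleGraph β}
    {T : SimpleGraph ι} {B : ι → Set α} (hB : IsTreeDecomp H T B)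
    (hwidth : ∀ i, (B i).encard ≤ w + 1) (hdeg : ∀ p, (Q.neighborSet p).encard ≤ d) :
    CFChoosable (strongProd H Q) ((w + 1) * (d ^ 2 + 2) - 1 : ℕ) := by
  obtain ⟨_, _, hbag⟩ := hB.exists_linearOrder_backNeighbors_subset
  choose bag hbag using hbag
  have hclique : ∀ x, (bagGraph B).IsClique (backNeighbors (· < ·) (bagGraph B) x) := fun x =>
    (isClique_bagGraph B (bag x)).subset ((Set.subset_insert _ _).trans (hbag x))
  have hback : ∀ x, (backNeighbors (· < ·) (bagGraph B) x).encard ≤ w := by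
    intro x
    have hx : x ∉ backNeighbors (· < ·) (bagGraph B) x := fun h => h.1.ne rfl
    have := (Set.encard_le_encard (hbag x)).trans (hwidth (bag x))
    rw [Set.encard_insert_of_notMem hx] at this
    exact (ENat.add_le_add_iff_right ENat.one_ne_top).mp this
  exact cfChoosable_strongProd hB.le_bagGraph hclique hback (encard_neighborSet_square_le hdeg)

theorem stmt16 (w d : ℕ) (α β : Type) [Fintype α] [Fintype β]
    (H : SimpleGraph α) (Q : SimpleGraph β)
    (htw : ∃ (ι : Type) (_ : Fintype ι) (T : SimpleGraph ι) (B : ι → Set α),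
      IsTreeDecomp H T B ∧ ∀ x : ι, (B x).ncard ≤ w + 1)
    (hdeg : ∀ v : β, (Q.neighborSet v).ncard ≤ d) :
    CFChoosable (strongProd H Q) (((w + 1) * (d ^ 2 + d + 2) - 1 : ℕ) : ℝ) := by
  obtain ⟨ι, _, T, B, hB, hw⟩ := htw
  refine (stmt16_general (w := w) (d := d) hB (fun i => ?_) fun p => ?_).mono ?_
  · exact_mod_cast Set.encard_le_coe_iff_finite_ncard_le.mpr ⟨(B i).toFinite, hw i⟩
  · exact Set.encard_le_coe_iff_finite_ncard_le.mpr ⟨(Q.neighborSet p).toFinite, hdeg p⟩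
  · gcongr; omega

end CFPaper
end
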